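/- arXiv:2506.09232 — 2 statements merged into one kernel-verified Lean document; each statement's English description precedes it below -/
import Mathlib

section
/- Suppose there exist a positive definite symmetric bilinear form (·,·) on g with (g_p, g_q) = 0 whenever p ≠ q, and a linear map τ : k → g with τ(k_p) ⊆ g_{−p} for all p ≥ 0, such that ([A, x], y) = (x, [τ(A), y]) for all x, y ∈ g and all A ∈ k. Then there exists a linear subspace N ⊆ C²₊(m, g) that is invariant under the k-action, is spanned by weight-homogeneous elements, and satisfies C²₊(m, g) = N ⊕ ∂(C¹₊(m, g)) (internal direct sum). -/
noncomputable section

open scoped BigOperators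

variable {L : Type} [LieRing L] [LieAlgebra ℝ L]

/-- The bracket of `m`, computed in `L` and mapped back into `m` using the projection
`π_m : L → m` (since `m` is closed under the bracket, this does not change the value). -/
def mBr7 (m : Submodule ℝ L) (πm : L →ₗ[ℝ] L) (hπ : ∀ z, πm z ∈ m) (x y : ↥m) : ↥m :=
  ⟨πm ⁅(x : L), (y : L)⁆, hπ _⟩

/-- `ψ : m → L` is ℝ-linear, i.e. an element of `C¹(m,g)`. -/
def IsLin7 (m : Submodule ℝ L) (ψ : ↥m → L) : Prop :=
  (∀ x y, ψ (x + y) = ψ x + ψ y) ∧ ∀ (c : ℝ) (x), ψ (c • x) = c • ψ x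

/-- `ψ : m × m → L` is alternating ℝ-bilinear, i.e. an element of `C²(m,g)`. -/
def IsAlt7 (m : Submodule ℝ L) (ψ : ↥m → ↥m → L) : Prop :=
  (∀ y, IsLin7 m (fun x => ψ x y)) ∧ (∀ x, IsLin7 m (ψ x)) ∧ ∀ x, ψ x x = 0

/-- The coboundary `∂ : C¹(m,g) → C²(m,g)`, `(∂φ)(x,y) = [x, φ y] - [y, φ x] + φ [x,y]`. -/
def cobound7 (m : Submodule ℝ L) (πm : L →ₗ[ℝ] L) (hπ : ∀ z, πm z ∈ m)
    (φ : ↥m → L) : ↥m → ↥m → L :=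
  fun x y => ⁅(x : L), φ y⁆ - ⁅(y : L), φ x⁆ + φ (mBr7 m πm hπ x y)

/-- A 1-cochain is homogeneous of weight `w` if `ψ(g_p) ⊆ g_{p+w}` for all `p < 0`. -/
def Homog17 (g : ℤ → Submodule ℝ L) (m : Submodule ℝ L) (w : ℤ) (ψ : ↥m → L) : Prop :=
  ∀ p : ℤ, p < 0 → ∀ x : ↥m, (x : L) ∈ g p → ψ x ∈ g (p + w)

/-- A 2-cochain is homogeneous of weight `w` if `ψ(g_p × g_q) ⊆ g_{p+q+w}` for `p,q < 0`. -/
def Homog27 (g : ℤ → Submodule ℝ L) (m : Submodule ℝ L) (w : ℤ) (ψ : ↥m → ↥m → L) : Prop :=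
  ∀ p q : ℤ, p < 0 → q < 0 → ∀ x y : ↥m,
    (x : L) ∈ g p → (y : L) ∈ g q → ψ x y ∈ g (p + q + w)

/-- `C¹₊(m,g)`: the span of the homogeneous 1-cochains of positive weight. -/
def C1plus7 (g : ℤ → Submodule ℝ L) (m : Submodule ℝ L) : Submodule ℝ (↥m → L) :=
  Submodule.span ℝ {ψ | IsLin7 m ψ ∧ ∃ w : ℤ, 0 < w ∧ Homog17 g m w ψ}

/-- `C²₊(m,g)`: the span of the homogeneous alternating 2-cochains of positive weight. -/
def C2plus7 (g : ℤ → Submodule ℝ L) (m : Submodule ℝ L) : Submodule ℝ (↥m → ↥m → L) :=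
  Submodule.span ℝ {ψ | IsAlt7 m ψ ∧ ∃ w : ℤ, 0 < w ∧ Homog27 g m w ψ}

/-- The image `∂(C¹₊(m,g)) ⊆ C²(m,g)`. -/
def imDel7 (g : ℤ → Submodule ℝ L) (m : Submodule ℝ L) (πm : L →ₗ[ℝ] L)
    (hπ : ∀ z, πm z ∈ m) : Submodule ℝ (↥m → ↥m → L) :=
  Submodule.span ℝ (cobound7 m πm hπ '' {φ | φ ∈ C1plus7 g m})

/-- The action of `A ∈ g⁰` on 2-cochains:
`(A·ψ)(x,y) = [A, ψ x y] - ψ(π_m [A, x]) y - ψ x (π_m [A, y])`. -/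
def act27 (m : Submodule ℝ L) (πm : L →ₗ[ℝ] L) (hπ : ∀ z, πm z ∈ m) (A : L)
    (ψ : ↥m → ↥m → L) : ↥m → ↥m → L :=
  fun x y => ⁅A, ψ x y⁆ - ψ ⟨πm ⁅A, (x : L)⁆, hπ _⟩ y - ψ x ⟨πm ⁅A, (y : L)⁆, hπ _⟩

/-! ### Parseval frames adapted to the grading -/

/-- A subspace of a finite-dimensional space with a positive definite form has a finite
Parseval frame. -/
theorem exists_parseval_frame {L : Type} [AddCommGroup L] [Module ℝ L] [FiniteDimensional ℝ L]
    (B : L →ₗ[ℝ] L →ₗ[ℝ] ℝ) (hBsymm : ∀ x y, B x y = B y x)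
    (hBpos : ∀ x : L, x ≠ 0 → 0 < B x x) (W : Submodule ℝ L) :
    ∃ (n : ℕ) (f : Fin n → L), (∀ i, f i ∈ W) ∧ ∀ x ∈ W, x = ∑ i, B x (f i) • f i := by
  let BW : LinearMap.BilinForm ℝ W := LinearMap.BilinForm.restrict B W
  have hBW : ∀ x y : W, BW x y = B x y := fun _ _ => rfl
  obtain ⟨v, hv⟩ := LinearMap.BilinForm.exists_orthogonal_basis (B := BW)
    ⟨fun x y => by simpa [hBW] using hBsymm x y⟩
  have hvv : ∀ i, 0 < B (v i) (v i) := fun i =>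
    hBpos _ (by simpa using v.ne_zero i)
  have hvo : ∀ i j, i ≠ j → B (v i) (v j) = 0 := fun i j hij => hv hij
  refine ⟨_, fun i => (Real.sqrt (B (v i) (v i)))⁻¹ • (v i : L),
    fun i => W.smul_mem _ (v i).2, fun x hx => ?_⟩
  have h : x = ∑ j, v.repr ⟨x, hx⟩ j • (v j : L) := by
    have h' := congrArg W.subtype (v.sum_repr ⟨x, hx⟩)
    rw [map_sum] at h'
    exact h'.symm
  have key : ∀ i, v.repr ⟨x, hx⟩ i * B (v i) (v i) = B x (v i) := fun i => by
    conv_rhs => rw [h]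
    rw [map_sum, LinearMap.sum_apply, Finset.sum_eq_single i]
    · simp
    · intro j _ hj
      simp [hvo j i hj]
    · simp
  conv_lhs => rw [h]
  refine Finset.sum_congr rfl fun i _ => ?_
  rw [map_smul, smul_smul, smul_eq_mul, ← key i]
  congr 1
  have h0 := hvv i
  have h1 : Real.sqrt (B (v i) (v i)) ≠ 0 := (Real.sqrt_pos.mpr h0).ne'
  have h2 := Real.mul_self_sqrt h0.le
  field_simp
  rw [sq, h2]

/-- The negative part of a graded space with orthogonal components has a finite Parseval frame
of homogeneous elements. -/
theorem exists_homogeneous_parseval_frame {L : Type} [AddCommGroup L] [Module ℝ L]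
    [FiniteDimensional ℝ L] (g : ℤ → Submodule ℝ L) (hg : iSupIndep g) (m : Submodule ℝ L)
    (hm : m = ⨆ p ∈ {p : ℤ | p < 0}, g p)
    (B : L →ₗ[ℝ] L →ₗ[ℝ] ℝ) (hBsymm : ∀ x y, B x y = B y x)
    (hBpos : ∀ x : L, x ≠ 0 → 0 < B x x)
    (hBorth : ∀ p q : ℤ, p ≠ q → ∀ x ∈ g p, ∀ y ∈ g q, B x y = 0) :
    ∃ (ι : Type) (_ : Fintype ι) (f : ι → m) (d : ι → ℤ),
      (∀ i, d i < 0) ∧ (∀ i, (f i : L) ∈ g (d i)) ∧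
      ∀ x : m, x = ∑ i, B x (f i) • f i := by
  choose n f hf hexp using fun p => exists_parseval_frame B hBsymm hBpos (g p)
  have hfin : {p | g p ≠ ⊥}.Finite := WellFoundedGT.finite_ne_bot_of_iSupIndep hg
  let S : Finset ℤ := hfin.toFinset.filter (· < 0)
  have hle : ∀ p, p < 0 → g p ≤ m := fun p hp => by
    rw [hm]
    exact le_iSup₂_of_le p hp le_rfl
  have hS : ∀ p : S, (p : ℤ) < 0 := fun p => (Finset.mem_filter.mp p.2).2
  refine ⟨Σ p : S, Fin (n p), inferInstance,
    fun i => ⟨f i.1 i.2, hle _ (hS i.1) (hf _ _)⟩, fun i => i.1, fun i => hS i.1,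
    fun i => hf _ _, ?_⟩
  suffices h : m ≤ LinearMap.eqLocus LinearMap.id
      (∑ i : Σ p : S, Fin (n p), (B.flip (f i.1 i.2)).smulRight (f i.1 i.2)) by
    rintro ⟨x, hx⟩
    have h' := h hx
    rw [LinearMap.mem_eqLocus] at h'
    apply Subtype.ext
    simpa [LinearMap.sum_apply] using h'
  rw [hm]
  refine iSup₂_le fun p hp x hx => ?_
  rw [LinearMap.mem_eqLocus]
  by_cases h0 : g p = ⊥
  · have : x = 0 := by simpa [h0] using hx
    simp [this]
  have hpS : p ∈ S := Finset.mem_filter.mpr ⟨hfin.mem_toFinset.mpr h0, hp⟩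
  simp only [LinearMap.id_apply, LinearMap.sum_apply, LinearMap.smulRight_apply,
    LinearMap.flip_apply]
  rw [Fintype.sum_sigma, Finset.sum_eq_single (⟨p, hpS⟩ : S)]
  · exact hexp p x hx
  · intro q _ hq
    refine Finset.sum_eq_zero fun i _ => ?_
    have hne : p ≠ (q : ℤ) := fun h => hq (Subtype.ext h.symm)
    rw [hBorth p q hne x hx _ (hf _ _), zero_smul]
  · simp

/-- With respect to a Parseval frame, the trace of `G` twisted by an operator in one argument
equals its trace twisted by the adjoint operator in the other argument. -/
theorem sum_frame_adjoint {M ι : Type} [AddCommGroup M] [Module ℝ M] [Fintype ι]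
    (C : M → M → ℝ) (hC : ∀ x y, C x y = C y x) (f : ι → M)
    (hf : ∀ x, x = ∑ i, C x (f i) • f i) (T T' : M → M)
    (hT : ∀ x y, C (T x) y = C x (T' y)) (G : M →ₗ[ℝ] M →ₗ[ℝ] ℝ) :
    ∑ i, G (T (f i)) (f i) = ∑ i, G (f i) (T' (f i)) := by
  have h1 : ∀ i, G (T (f i)) (f i) = ∑ j, C (T (f i)) (f j) * G (f j) (f i) := fun i => by
    conv_lhs => rw [hf (T (f i))]
    simp [LinearMap.sum_apply]
  have h2 : ∀ i, G (f i) (T' (f i)) = ∑ j, C (T' (f i)) (f j) * G (f i) (f j) := fun i => by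
    conv_lhs => rw [hf (T' (f i))]
    simp
  simp only [h1, h2]
  rw [Finset.sum_comm]
  refine Finset.sum_congr rfl fun i _ => Finset.sum_congr rfl fun j _ => ?_
  rw [hT, hC]

/-! ### Orthogonal complements inside a finite-dimensional subspace -/

/-- If `b` is positive definite on the finite-dimensional subspace `I`, every vector splits as
the sum of an element of `I` and a vector orthogonal to `I`. -/
theorem exists_mem_sub_orthogonal {E : Type} [AddCommGroup E] [Module ℝ E]
    (b : E →ₗ[ℝ] E →ₗ[ℝ] ℝ) (I : Submodule ℝ E) [FiniteDimensional ℝ I]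
    (hb : ∀ x ∈ I, b x x = 0 → x = 0) (x : E) :
    ∃ y ∈ I, ∀ z ∈ I, b (x - y) z = 0 := by
  let r : I →ₗ[ℝ] Module.Dual ℝ I := LinearMap.BilinForm.restrict b I
  have hr : Function.Injective r := by
    rw [injective_iff_map_eq_zero]
    intro y hy
    have := LinearMap.congr_fun hy y
    exact Subtype.ext (hb y y.2 this)
  have hs : Function.Surjective r :=
    (LinearMap.injective_iff_surjective_of_finrank_eq_finrank
      Subspace.dual_finrank_eq.symm).mp hr
  obtain ⟨y, hy⟩ := hs ((b x).domRestrict I)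
  refine ⟨y, y.2, fun z hz => ?_⟩
  have h : b y z = b x z := LinearMap.congr_fun hy ⟨z, hz⟩
  rw [map_sub, LinearMap.sub_apply, h, sub_self]

/-! ### Cochains -/

section Cochains

variable {g : ℤ → Submodule ℝ L} {m : Submodule ℝ L} {πm : L →ₗ[ℝ] L} {hπ : ∀ z, πm z ∈ m}

/-- The linear map underlying a linear 1-cochain. -/
def IsLin7.toLinearMap {ψ : m → L} (h : IsLin7 m ψ) : m →ₗ[ℝ] L where
  toFun := ψ
  map_add' := h.1
  map_smul' := h.2

theorem IsLin7.map_zero {ψ : m → L} (h : IsLin7 m ψ) : ψ 0 = 0 := h.toLinearMap.map_zero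

/-- The bilinear map underlying an alternating 2-cochain. -/
def IsAlt7.toLinearMap₂ {ψ : m → m → L} (h : IsAlt7 m ψ) : m →ₗ[ℝ] m →ₗ[ℝ] L :=
  LinearMap.mk₂ ℝ ψ (fun x x' y => (h.1 y).1 x x') (fun c x y => (h.1 y).2 c x)
    (fun x => (h.2.1 x).1) (fun c x y => (h.2.1 x).2 c y)

@[simp]
theorem IsAlt7.toLinearMap₂_apply {ψ : m → m → L} (h : IsAlt7 m ψ) (x y : m) :
    h.toLinearMap₂ x y = ψ x y := rfl

theorem IsAlt7.add_swap {ψ : m → m → L} (h : IsAlt7 m ψ) (x y : m) : ψ x y + ψ y x = 0 := by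
  have h1 := h.2.2 (x + y)
  have h2 := (h.1 (x + y)).1 x y
  simp only at h2
  rw [h2, (h.2.1 x).1, (h.2.1 y).1, h.2.2 x, h.2.2 y] at h1
  simpa using h1

/-- The endomorphism `x ↦ π_m [A, x]` of `m`. -/
def adProj (πm : L →ₗ[ℝ] L) (hπ : ∀ z, πm z ∈ m) (A : L) : m →ₗ[ℝ] m :=
  (πm ∘ₗ (LieAlgebra.ad ℝ L A : L →ₗ[ℝ] L) ∘ₗ m.subtype).codRestrict m fun _ => hπ _

@[simp]
theorem coe_adProj (A : L) (x : m) : (adProj πm hπ A x : L) = πm ⁅A, (x : L)⁆ := rfl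

theorem act27_apply (A : L) (ψ : m → m → L) (x y : m) :
    act27 m πm hπ A ψ x y = ⁅A, ψ x y⁆ - ψ (adProj πm hπ A x) y - ψ x (adProj πm hπ A y) := rfl

/-- The action of `A` on 1-cochains. -/
def actOne (πm : L →ₗ[ℝ] L) (hπ : ∀ z, πm z ∈ m) (A : L) (φ : m → L) : m → L :=
  fun x => ⁅A, φ x⁆ - φ (adProj πm hπ A x)

theorem IsLin7.actOne {φ : m → L} (h : IsLin7 m φ) (A : L) : IsLin7 m (actOne πm hπ A φ) := by
  constructor
  · intro x y
    simp only [_root_.actOne, map_add, h.1, lie_add]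
    abel
  · intro c x
    simp only [_root_.actOne, map_smul, h.2, lie_smul, smul_sub]

theorem IsAlt7.act27 {ψ : m → m → L} (h : IsAlt7 m ψ) (A : L) :
    IsAlt7 m (act27 m πm hπ A ψ) := by
  have e : ∀ x y, ψ x y = h.toLinearMap₂ x y := fun _ _ => rfl
  refine ⟨fun y => ⟨fun x x' => ?_, fun c x => ?_⟩, fun x => ⟨fun y y' => ?_, fun c y => ?_⟩,
    fun x => ?_⟩
  · simp only [act27_apply, e, map_add, lie_add, LinearMap.add_apply]
    abel
  · simp only [act27_apply, e, map_smul, lie_smul, LinearMap.smul_apply, smul_sub]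
  · simp only [act27_apply, e, map_add, lie_add]
    abel
  · simp only [act27_apply, e, map_smul, lie_smul, smul_sub]
  · rw [act27_apply, h.2.2, lie_zero, zero_sub, sub_eq_add_neg, ← neg_add, h.add_swap, neg_zero]

/-- The coboundary as a linear map on arbitrary functions. -/
def coboundLinear (m : Submodule ℝ L) (πm : L →ₗ[ℝ] L) (hπ : ∀ z, πm z ∈ m) :
    (m → L) →ₗ[ℝ] (m → m → L) where
  toFun := cobound7 m πm hπ
  map_add' φ φ' := by
    funext x y
    simp only [cobound7, Pi.add_apply, lie_add]
    abel
  map_smul' c φ := by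
    funext x y
    simp only [cobound7, Pi.smul_apply, lie_smul, smul_add, smul_sub, RingHom.id_apply]

theorem IsLin7.cobound7 {φ : m → L} (h : IsLin7 m φ) : IsAlt7 m (cobound7 m πm hπ φ) := by
  have e : ∀ x, φ x = h.toLinearMap x := fun _ => rfl
  have hbr : ∀ x y, mBr7 m πm hπ x y = adProj πm hπ (x : L) y := fun _ _ => rfl
  have hadd : ∀ x x' y, mBr7 m πm hπ (x + x') y = mBr7 m πm hπ x y + mBr7 m πm hπ x' y :=
    fun x x' y => Subtype.ext (by simp [mBr7])
  have hsmul : ∀ (c : ℝ) x y, mBr7 m πm hπ (c • x) y = c • mBr7 m πm hπ x y :=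
    fun c x y => Subtype.ext (by simp [mBr7])
  have hself : ∀ x, mBr7 m πm hπ x x = 0 := fun x => Subtype.ext (by simp [mBr7])
  refine ⟨fun y => ⟨fun x x' => ?_, fun c x => ?_⟩, fun x => ⟨fun y y' => ?_, fun c y => ?_⟩,
    fun x => ?_⟩
  · simp only [_root_.cobound7, e, hadd, map_add, lie_add, add_lie, Submodule.coe_add]
    abel
  · simp only [_root_.cobound7, e, hsmul, map_smul, lie_smul, smul_lie, Submodule.coe_smul,
      smul_sub, smul_add]
  · simp only [_root_.cobound7, e, hbr, map_add, lie_add, add_lie, Submodule.coe_add]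
    abel
  · simp only [_root_.cobound7, e, hbr, map_smul, lie_smul, smul_lie, Submodule.coe_smul,
      smul_sub, smul_add]
  · simp only [_root_.cobound7, hself, h.map_zero, sub_self, add_zero]

/-- The coboundary is equivariant under elements normalizing `m`. -/
theorem act27_cobound7 {φ : m → L} (h : IsLin7 m φ) (Z : L)
    (hZ : ∀ x ∈ m, ⁅Z, x⁆ ∈ m) (hm : ∀ x ∈ m, ∀ y ∈ m, ⁅x, y⁆ ∈ m) (hπ1 : ∀ x ∈ m, πm x = x) :
    act27 m πm hπ Z (cobound7 m πm hπ φ) = cobound7 m πm hπ (actOne πm hπ Z φ) := by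
  have hT : ∀ x, adProj πm hπ Z x = ⟨⁅Z, (x : L)⁆, hZ _ x.2⟩ := fun x =>
    Subtype.ext (hπ1 _ (hZ _ x.2))
  have hb : ∀ x y, mBr7 m πm hπ x y = ⟨⁅(x : L), (y : L)⁆, hm _ x.2 _ y.2⟩ := fun x y =>
    Subtype.ext (hπ1 _ (hm _ x.2 _ y.2))
  funext x y
  have hj : adProj πm hπ Z (mBr7 m πm hπ x y) =
      mBr7 m πm hπ (adProj πm hπ Z x) y + mBr7 m πm hπ x (adProj πm hπ Z y) := by
    apply Subtype.ext
    simp only [hT, hb, Submodule.coe_add]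
    exact leibniz_lie _ _ _
  rw [act27_apply]
  simp only [cobound7, actOne]
  rw [hj, h.1, lie_add, lie_sub, lie_sub, lie_sub, leibniz_lie Z (x : L), leibniz_lie Z (y : L)]
  have h1 : ((adProj πm hπ Z x : m) : L) = ⁅Z, (x : L)⁆ := by rw [hT]
  have h2 : ((adProj πm hπ Z y : m) : L) = ⁅Z, (y : L)⁆ := by rw [hT]
  rw [h1, h2]
  abel

/-- The alternating 2-cochains that are homogeneous of weight `w`. -/
def homogAlt (g : ℤ → Submodule ℝ L) (m : Submodule ℝ L) (w : ℤ) :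
    Submodule ℝ (m → m → L) where
  carrier := {ψ | IsAlt7 m ψ ∧ Homog27 g m w ψ}
  zero_mem' := ⟨⟨fun _ => ⟨by simp, by simp⟩, fun _ => ⟨by simp, by simp⟩, by simp⟩,
    fun _ _ _ _ _ _ _ _ => Submodule.zero_mem _⟩
  add_mem' := by
    rintro ψ ψ' ⟨h, hw⟩ ⟨h', hw'⟩
    refine ⟨⟨fun y => ⟨fun x x' => ?_, fun c x => ?_⟩, fun x => ⟨fun y y' => ?_, fun c y => ?_⟩,
      fun x => ?_⟩, fun p q hp hq x y hx hy =>
        Submodule.add_mem _ (hw p q hp hq x y hx hy) (hw' p q hp hq x y hx hy)⟩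
    · simp only [Pi.add_apply, (h.1 y).1 x x', (h'.1 y).1 x x']
      abel
    · simp only [Pi.add_apply, (h.1 y).2 c x, (h'.1 y).2 c x, smul_add]
    · simp only [Pi.add_apply, (h.2.1 x).1, (h'.2.1 x).1]
      abel
    · simp only [Pi.add_apply, (h.2.1 x).2, (h'.2.1 x).2, smul_add]
    · simp only [Pi.add_apply, h.2.2, h'.2.2, add_zero]
  smul_mem' := by
    rintro r ψ ⟨h, hw⟩
    refine ⟨⟨fun y => ⟨fun x x' => ?_, fun c x => ?_⟩, fun x => ⟨fun y y' => ?_, fun c y => ?_⟩,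
      fun x => ?_⟩, fun p q hp hq x y hx hy => Submodule.smul_mem _ _ (hw p q hp hq x y hx hy)⟩
    · simp only [Pi.smul_apply, (h.1 y).1 x x', smul_add]
    · simp only [Pi.smul_apply, (h.1 y).2 c x, smul_comm c r]
    · simp only [Pi.smul_apply, (h.2.1 x).1, smul_add]
    · simp only [Pi.smul_apply, (h.2.1 x).2, smul_comm c r]
    · simp only [Pi.smul_apply, h.2.2, smul_zero]

theorem C2plus7_eq_iSup : C2plus7 g m = ⨆ w : {w : ℤ // 0 < w}, homogAlt g m w := by
  apply le_antisymm
  · refine Submodule.span_le.mpr ?_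
    rintro ψ ⟨h, w, hw, hψ⟩
    exact Submodule.mem_iSup_of_mem (p := fun w : {w : ℤ // 0 < w} => homogAlt g m w)
      ⟨w, hw⟩ ⟨h, hψ⟩
  · exact iSup_le fun w ψ hψ => Submodule.subset_span ⟨hψ.1, w, w.2, hψ.2⟩

theorem imDel7_eq_span : imDel7 g m πm hπ = Submodule.span ℝ
    (cobound7 m πm hπ '' {φ | IsLin7 m φ ∧ ∃ w : ℤ, 0 < w ∧ Homog17 g m w φ}) := by
  have h := Submodule.map_span (coboundLinear m πm hπ)
    {φ | IsLin7 m φ ∧ ∃ w : ℤ, 0 < w ∧ Homog17 g m w φ}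
  refine Eq.trans ?_ h
  exact Submodule.span_eq (Submodule.map (coboundLinear m πm hπ) (C1plus7 g m))

theorem Homog17.cobound7 (hbr : ∀ p q : ℤ, ∀ x ∈ g p, ∀ y ∈ g q, ⁅x, y⁆ ∈ g (p + q))
    (hπneg : ∀ p < 0, ∀ x ∈ g p, πm x = x) {w : ℤ} {φ : m → L} (h : Homog17 g m w φ) :
    Homog27 g m w (cobound7 m πm hπ φ) := by
  intro p q hp hq x y hx hy
  refine Submodule.add_mem _ (Submodule.sub_mem _ ?_ ?_) ?_
  · simpa only [add_assoc] using hbr p (q + w) _ hx _ (h q hq y hy)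
  · have := hbr q (p + w) _ hy _ (h p hp x hx)
    rwa [show q + (p + w) = p + q + w by ring] at this
  · refine h (p + q) (by omega) _ ?_
    have hxy := hbr p q _ hx _ hy
    simpa [mBr7, hπneg (p + q) (by omega) _ hxy] using hxy

theorem Homog17.actOne_of_nonpos (hbr : ∀ p q : ℤ, ∀ x ∈ g p, ∀ y ∈ g q, ⁅x, y⁆ ∈ g (p + q))
    (hπneg : ∀ p < 0, ∀ x ∈ g p, πm x = x) {w : ℤ} {φ : m → L} (h : Homog17 g m w φ)
    {r : ℤ} (hr : r ≤ 0) {Z : L} (hZ : Z ∈ g r) :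
    Homog17 g m (w + r) (actOne πm hπ Z φ) := by
  intro p hp x hx
  refine Submodule.sub_mem _ ?_ ?_
  · have := hbr r (p + w) _ hZ _ (h p hp x hx)
    rwa [show r + (p + w) = p + (w + r) by ring] at this
  · have hZx := hbr r p _ hZ _ hx
    have := h (r + p) (by omega) (adProj πm hπ Z x)
      (by simpa [hπneg (r + p) (by omega) _ hZx] using hZx)
    rwa [show r + p + w = p + (w + r) by ring] at this

theorem act27_mem_homogAlt (hbr : ∀ p q : ℤ, ∀ x ∈ g p, ∀ y ∈ g q, ⁅x, y⁆ ∈ g (p + q))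
    (hπneg : ∀ p < 0, ∀ x ∈ g p, πm x = x) (hπnonneg : ∀ p, 0 ≤ p → ∀ x ∈ g p, πm x = 0)
    {w : ℤ} {ψ : m → m → L} (h : ψ ∈ homogAlt g m w) {r : ℤ} {A : L} (hA : A ∈ g r) :
    act27 m πm hπ A ψ ∈ homogAlt g m (w + r) := by
  have hT : ∀ p, ∀ x : m, (x : L) ∈ g p →
      (r + p < 0 ∧ (adProj πm hπ A x : L) ∈ g (r + p)) ∨ adProj πm hπ A x = 0 := by
    intro p x hx
    have hAx := hbr r p _ hA _ hx
    rcases lt_or_ge (r + p) 0 with hlt | hge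
    · exact Or.inl ⟨hlt, by simpa [hπneg _ hlt _ hAx] using hAx⟩
    · exact Or.inr (Subtype.ext (hπnonneg _ hge _ hAx))
  refine ⟨h.1.act27 A, fun p q hp hq x y hx hy => ?_⟩
  rw [act27_apply]
  refine Submodule.sub_mem _ (Submodule.sub_mem _ ?_ ?_) ?_
  · have := hbr r _ _ hA _ (h.2 p q hp hq x y hx hy)
    rwa [show r + (p + q + w) = p + q + (w + r) by ring] at this
  · rcases hT p x hx with ⟨hlt, hmem⟩ | h0
    · have := h.2 (r + p) q hlt hq _ y hmem hy
      rwa [show r + p + q + w = p + q + (w + r) by ring] at this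
    · rw [h0, (h.1.1 y).map_zero]
      exact Submodule.zero_mem _
  · rcases hT q y hy with ⟨hlt, hmem⟩ | h0
    · have := h.2 p (r + q) hp hlt x _ hx hmem
      rwa [show p + (r + q) + w = p + q + (w + r) by ring] at this
    · rw [h0, (h.1.2.1 x).map_zero]
      exact Submodule.zero_mem _

/-- The action `A ↦ A · ψ` on a fixed alternating 2-cochain `ψ`, as a linear map in `A`. -/
def act27Linear (πm : L →ₗ[ℝ] L) (hπ : ∀ z, πm z ∈ m) {ψ : m → m → L} (h : IsAlt7 m ψ) :
    L →ₗ[ℝ] (m → m → L) where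
  toFun A := act27 m πm hπ A ψ
  map_add' A A' := by
    have hT : ∀ x, adProj πm hπ (A + A') x = adProj πm hπ A x + adProj πm hπ A' x := fun x =>
      Subtype.ext (by simp)
    funext x y
    have hadd := (h.1 y).1 (adProj πm hπ A x) (adProj πm hπ A' x)
    simp only at hadd
    simp only [act27_apply, Pi.add_apply, hT, add_lie, (h.2.1 x).1, hadd]
    abel
  map_smul' c A := by
    have hT : ∀ x, adProj πm hπ (c • A) x = c • adProj πm hπ A x := fun x =>
      Subtype.ext (by simp)
    funext x y
    have hsmul := (h.1 y).2 c (adProj πm hπ A x)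
    simp only at hsmul
    simp only [act27_apply, Pi.smul_apply, hT, smul_lie, (h.2.1 x).2, hsmul, smul_sub,
      RingHom.id_apply]

/-- The action of a fixed `A` on arbitrary functions. -/
def actLinear (πm : L →ₗ[ℝ] L) (hπ : ∀ z, πm z ∈ m) (A : L) :
    (m → m → L) →ₗ[ℝ] (m → m → L) where
  toFun := act27 m πm hπ A
  map_add' ψ ψ' := by
    funext x y
    simp only [act27_apply, Pi.add_apply, lie_add]
    abel
  map_smul' c ψ := by
    funext x y
    simp only [act27_apply, Pi.smul_apply, lie_smul, smul_sub, RingHom.id_apply]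

theorem act27_mem_C2plus7 (hbr : ∀ p q : ℤ, ∀ x ∈ g p, ∀ y ∈ g q, ⁅x, y⁆ ∈ g (p + q))
    (hπneg : ∀ p < 0, ∀ x ∈ g p, πm x = x) (hπnonneg : ∀ p, 0 ≤ p → ∀ x ∈ g p, πm x = 0)
    {ψ : m → m → L} (h : ψ ∈ C2plus7 g m) {r : ℤ} (hr : 0 ≤ r) {A : L} (hA : A ∈ g r) :
    act27 m πm hπ A ψ ∈ C2plus7 g m := by
  suffices hle : C2plus7 g m ≤ (C2plus7 g m).comap (actLinear πm hπ A) from hle h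
  refine Submodule.span_le.mpr ?_
  rintro χ ⟨hχ, w, hw, hχw⟩
  have := act27_mem_homogAlt (hπ := hπ) hbr hπneg hπnonneg ⟨hχ, hχw⟩ hA
  exact Submodule.subset_span ⟨this.1, w + r, by omega, this.2⟩

/-! ### The inner product on 2-cochains -/

/-- The bilinear form on 2-cochains induced by `B` and a finite family in `m`. -/
def cochainForm (B : L →ₗ[ℝ] L →ₗ[ℝ] ℝ) {ι : Type} [Fintype ι] (f : ι → m) :
    (m → m → L) →ₗ[ℝ] (m → m → L) →ₗ[ℝ] ℝ :=
  LinearMap.mk₂ ℝ (fun ψ ψ' => ∑ i, ∑ j, B (ψ (f i) (f j)) (ψ' (f i) (f j)))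
    (fun ψ ψ' χ => by simp [Finset.sum_add_distrib])
    (fun c ψ χ => by simp [Finset.mul_sum])
    (fun ψ χ χ' => by simp [Finset.sum_add_distrib])
    (fun c ψ χ => by simp [Finset.mul_sum])

theorem cochainForm_apply (B : L →ₗ[ℝ] L →ₗ[ℝ] ℝ) {ι : Type} [Fintype ι] (f : ι → m)
    (ψ ψ' : m → m → L) :
    cochainForm B f ψ ψ' = ∑ i, ∑ j, B (ψ (f i) (f j)) (ψ' (f i) (f j)) := rfl

theorem cochainForm_eq_zero_of_weight_ne {B : L →ₗ[ℝ] L →ₗ[ℝ] ℝ}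
    (hBorth : ∀ p q : ℤ, p ≠ q → ∀ x ∈ g p, ∀ y ∈ g q, B x y = 0)
    {ι : Type} [Fintype ι] {f : ι → m} {d : ι → ℤ} (hd : ∀ i, d i < 0)
    (hf : ∀ i, (f i : L) ∈ g (d i)) {w w' : ℤ} (hw : w ≠ w') {ψ ψ' : m → m → L}
    (hψ : Homog27 g m w ψ) (hψ' : Homog27 g m w' ψ') : cochainForm B f ψ ψ' = 0 := by
  rw [cochainForm_apply]
  refine Finset.sum_eq_zero fun i _ => Finset.sum_eq_zero fun j _ => ?_
  exact hBorth (d i + d j + w) (d i + d j + w') (by omega) _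
    (hψ _ _ (hd i) (hd j) _ _ (hf i) (hf j)) _ (hψ' _ _ (hd i) (hd j) _ _ (hf i) (hf j))

theorem eq_zero_of_cochainForm_self {B : L →ₗ[ℝ] L →ₗ[ℝ] ℝ}
    (hBpos : ∀ x : L, x ≠ 0 → 0 < B x x) {ι : Type} [Fintype ι] {f : ι → m}
    (hexp : ∀ x : m, x = ∑ i, B x (f i) • f i) {ψ : m → m → L} (h : IsAlt7 m ψ)
    (h0 : cochainForm B f ψ ψ = 0) : ψ = 0 := by
  have hnn : ∀ z : L, 0 ≤ B z z := fun z => by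
    rcases eq_or_ne z 0 with rfl | hz
    · simp
    · exact (hBpos z hz).le
  have hij : ∀ i j, ψ (f i) (f j) = 0 := fun i j => by
    by_contra hne
    rw [cochainForm_apply, Finset.sum_eq_zero_iff_of_nonneg
      (fun i _ => Finset.sum_nonneg fun j _ => hnn _)] at h0
    have h1 := h0 i (Finset.mem_univ i)
    rw [Finset.sum_eq_zero_iff_of_nonneg (fun j _ => hnn _)] at h1
    exact (hBpos _ hne).ne' (h1 j (Finset.mem_univ j))
  funext x y
  change h.toLinearMap₂ x y = 0
  rw [hexp x, hexp y]
  simp [LinearMap.sum_apply, hij]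

theorem cochainForm_act27 {B : L →ₗ[ℝ] L →ₗ[ℝ] ℝ} (hBsymm : ∀ x y, B x y = B y x)
    {ι : Type} [Fintype ι] {f : ι → m} (hexp : ∀ x : m, x = ∑ i, B x (f i) • f i)
    {A A' : L} (hA : ∀ x y, B ⁅A, x⁆ y = B x ⁅A', y⁆)
    (hAm : ∀ x y : m, B (adProj πm hπ A x) y = B x (adProj πm hπ A' y))
    {ψ ψ' : m → m → L} (h : IsAlt7 m ψ) (h' : IsAlt7 m ψ') :
    cochainForm B f (act27 m πm hπ A ψ) ψ' = cochainForm B f ψ (act27 m πm hπ A' ψ') := by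
  have hadj := sum_frame_adjoint (fun x y : m => B x y) (fun x y => hBsymm x y) f hexp
    (adProj πm hπ A) (adProj πm hπ A') hAm
  have e1 : ∑ i, ∑ j, B (ψ (adProj πm hπ A (f i)) (f j)) (ψ' (f i) (f j)) =
      ∑ i, ∑ j, B (ψ (f i) (f j)) (ψ' (adProj πm hπ A' (f i)) (f j)) := by
    rw [Finset.sum_comm, Finset.sum_comm (γ := ι) (f := fun i j =>
      B (ψ (f i) (f j)) (ψ' (adProj πm hπ A' (f i)) (f j)))]
    exact Finset.sum_congr rfl fun j _ =>
      hadj (B.compl₁₂ (h.toLinearMap₂.flip (f j)) (h'.toLinearMap₂.flip (f j)))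
  have e2 : ∑ i, ∑ j, B (ψ (f i) (adProj πm hπ A (f j))) (ψ' (f i) (f j)) =
      ∑ i, ∑ j, B (ψ (f i) (f j)) (ψ' (f i) (adProj πm hπ A' (f j))) :=
    Finset.sum_congr rfl fun i _ =>
      hadj (B.compl₁₂ (h.toLinearMap₂ (f i)) (h'.toLinearMap₂ (f i)))
  simp only [cochainForm_apply, act27_apply, map_sub, LinearMap.sub_apply,
    Finset.sum_sub_distrib, hA, e1, e2]

theorem isAlt7_of_mem_C2plus7 {ψ : m → m → L} (h : ψ ∈ C2plus7 g m) : IsAlt7 m ψ := by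
  have hle : C2plus7 g m ≤ homogAlt (fun _ => ⊤) m 0 := by
    refine Submodule.span_le.mpr ?_
    rintro χ ⟨hχ, -⟩
    exact ⟨hχ, fun _ _ _ _ _ _ _ _ => trivial⟩
  exact (hle h).1

instance [FiniteDimensional ℝ L] : FiniteDimensional ℝ (C2plus7 g m) := by
  let F : (m →ₗ[ℝ] m →ₗ[ℝ] L) →ₗ[ℝ] (m → m → L) :=
    { toFun := fun ψ x y => ψ x y
      map_add' := fun _ _ => rfl
      map_smul' := fun _ _ => rfl }
  have hle : C2plus7 g m ≤ LinearMap.range F := fun ψ hψ =>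
    ⟨(isAlt7_of_mem_C2plus7 hψ).toLinearMap₂, rfl⟩
  exact Submodule.finiteDimensional_of_le hle

theorem imDel7_le_C2plus7 (hbr : ∀ p q : ℤ, ∀ x ∈ g p, ∀ y ∈ g q, ⁅x, y⁆ ∈ g (p + q))
    (hπneg : ∀ p < 0, ∀ x ∈ g p, πm x = x) : imDel7 g m πm hπ ≤ C2plus7 g m := by
  rw [imDel7_eq_span]
  refine Submodule.span_le.mpr ?_
  rintro _ ⟨φ, ⟨hφ, w, hw, hφw⟩, rfl⟩
  exact Submodule.subset_span ⟨hφ.cobound7, w, hw, hφw.cobound7 hbr hπneg⟩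

end Cochains

/-- Morimoto's criterion: let `g = ⊕_p g_p` be a finite-dimensional
ℤ-graded real Lie algebra with negative part `m` and non-negative part `g⁰`
(with projection `π_m : g → m` along `g⁰`), and let `k ⊆ g⁰` be a graded subalgebra.
Suppose there exist a positive definite symmetric bilinear form `(·,·)` on `g` for which
distinct graded components are orthogonal, and a linear map `τ : k → g` with
`τ(k_p) ⊆ g_{-p}` for `p ≥ 0`, such that `([A,x], y) = (x, [τ(A), y])` for all
`x, y ∈ g`, `A ∈ k`.  Then there is a subspace `N ⊆ C²₊(m,g)`, invariant under the
`k`-action and spanned by weight-homogeneous elements, with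
`C²₊(m,g) = N ⊕ ∂(C¹₊(m,g))`. -/
theorem morimoto_criterion
    (L : Type) [LieRing L] [LieAlgebra ℝ L] [FiniteDimensional ℝ L]
    (g : ℤ → Submodule ℝ L) (hinternal : DirectSum.IsInternal g)
    (hbr : ∀ p q : ℤ, ∀ x ∈ g p, ∀ y ∈ g q, ⁅x, y⁆ ∈ g (p + q))
    (m g0 : Submodule ℝ L)
    (hm : m = ⨆ p ∈ {p : ℤ | p < 0}, g p)
    (hg0 : g0 = ⨆ p ∈ {p : ℤ | 0 ≤ p}, g p)
    (πm : L →ₗ[ℝ] L) (hπmem : ∀ z, πm z ∈ m)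
    (hπ1 : ∀ x ∈ m, πm x = x) (hπ0 : ∀ x ∈ g0, πm x = 0)
    (k : Submodule ℝ L) (hk0 : k ≤ g0)
    (hkbr : ∀ x ∈ k, ∀ y ∈ k, ⁅x, y⁆ ∈ k)
    (hkgraded : k = ⨆ p ∈ {p : ℤ | 0 ≤ p}, k ⊓ g p)
    (B : L →ₗ[ℝ] L →ₗ[ℝ] ℝ)
    (hBsymm : ∀ x y, B x y = B y x)
    (hBpos : ∀ x : L, x ≠ 0 → 0 < B x x)
    (hBorth : ∀ p q : ℤ, p ≠ q → ∀ x ∈ g p, ∀ y ∈ g q, B x y = 0)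
    (τ : ↥k →ₗ[ℝ] L)
    (hτ : ∀ p : ℤ, 0 ≤ p → ∀ A : ↥k, (A : L) ∈ g p → τ A ∈ g (-p))
    (hcomp : ∀ (A : ↥k) (x y : L), B ⁅(A : L), x⁆ y = B x ⁅τ A, y⁆) :
    ∃ N : Submodule ℝ (↥m → ↥m → L),
      N ≤ C2plus7 g m ∧
      (∀ A : ↥k, ∀ ψ ∈ N, act27 m πm hπmem (A : L) ψ ∈ N) ∧
      N = Submodule.span ℝ {ψ | ψ ∈ N ∧ ∃ w : ℤ, Homog27 g m w ψ} ∧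
      N ⊔ imDel7 g m πm hπmem = C2plus7 g m ∧
      Disjoint N (imDel7 g m πm hπmem) := by
  have hle : ∀ p < 0, g p ≤ m := fun p hp => by
    rw [hm]
    exact le_iSup₂_of_le p hp le_rfl
  have hle0 : ∀ p, 0 ≤ p → g p ≤ g0 := fun p hp => by
    rw [hg0]
    exact le_iSup₂_of_le p hp le_rfl
  have hπneg : ∀ p < 0, ∀ x ∈ g p, πm x = x := fun p hp x hx => hπ1 x (hle p hp hx)
  have hπnonneg : ∀ p, 0 ≤ p → ∀ x ∈ g p, πm x = 0 := fun p hp x hx => hπ0 x (hle0 p hp hx)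
  -- elements of nonpositive degree normalize `m`
  have hnorm : ∀ r ≤ 0, ∀ Z ∈ g r, ∀ x ∈ m, ⁅Z, x⁆ ∈ m := by
    intro r hr Z hZ
    suffices h : m ≤ m.comap (LieAlgebra.ad ℝ L Z : L →ₗ[ℝ] L) from fun x hx => h hx
    conv_lhs => rw [hm]
    exact iSup₂_le fun p hp x hx =>
      hle (r + p) (by have : p < 0 := hp; omega) (hbr r p Z hZ x hx)
  have hmm : ∀ x ∈ m, ∀ y ∈ m, ⁅x, y⁆ ∈ m := by
    intro x hx y hy
    suffices h : m ≤ m.comap (LieAlgebra.ad ℝ L y : L →ₗ[ℝ] L) by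
      rw [← lie_skew]
      exact m.neg_mem (h hx)
    conv_lhs => rw [hm]
    refine iSup₂_le fun p hp z hz => ?_
    have : ⁅z, y⁆ ∈ m := hnorm p (le_of_lt hp) z hz y hy
    rw [Submodule.mem_comap, LieAlgebra.ad_apply, ← lie_skew]
    exact m.neg_mem this
  -- `π_m` is the orthogonal projection
  have hπB : ∀ z, ∀ y ∈ m, B (πm z) y = B z y := by
    intro z y hy
    have hz : z ∈ ⨆ p, g p := by
      rw [hinternal.submodule_iSup_eq_top]
      trivial
    have hy' := hy
    rw [hm] at hy'
    refine Submodule.iSup_induction g (motive := fun z => B (πm z) y = B z y) hz ?_ (by simp)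
      (fun a b ha hb => by simp [ha, hb])
    intro q z hzq
    rcases lt_or_ge q 0 with hq | hq
    · rw [hπneg q hq z hzq]
    rw [hπnonneg q hq z hzq, map_zero, LinearMap.zero_apply]
    suffices h : m ≤ LinearMap.ker (B z) from (h hy).symm
    rw [hm]
    exact iSup₂_le fun p hp x hx =>
      hBorth q p (by have : p < 0 := hp; omega) z hzq x hx
  have hadj : ∀ (A : k) (x y : m),
      B (adProj πm hπmem (A : L) x) y = B x (adProj πm hπmem (τ A) y) := by
    intro A x y
    rw [coe_adProj, coe_adProj, hπB _ _ y.2, hBsymm x, hπB _ _ x.2, hcomp, hBsymm]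
  obtain ⟨ι, _, f, d, hd, hf, hexp⟩ := exists_homogeneous_parseval_frame g
    hinternal.submodule_iSupIndep m hm B hBsymm hBpos hBorth
  set I := imDel7 g m πm hπmem with hI
  have hIV : I ≤ C2plus7 g m := imDel7_le_C2plus7 hbr hπneg
  let b := cochainForm B f
  have hbdef : ∀ ψ ∈ C2plus7 g m, b ψ ψ = 0 → ψ = 0 := fun ψ hψ h0 =>
    eq_zero_of_cochainForm_self hBpos hexp (isAlt7_of_mem_C2plus7 hψ) h0
  have hgen : ∀ ψ, (∀ φ w, IsLin7 m φ → 0 < w → Homog17 g m w φ →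
      b ψ (cobound7 m πm hπmem φ) = 0) → ∀ χ ∈ I, b ψ χ = 0 := by
    intro ψ h
    suffices hk : I ≤ LinearMap.ker (b ψ) from fun χ hχ => hk hχ
    rw [hI, imDel7_eq_span]
    refine Submodule.span_le.mpr ?_
    rintro _ ⟨φ, ⟨hφ, w, hw, hφw⟩, rfl⟩
    exact h φ w hφ hw hφw
  have hmemI : ∀ φ w, IsLin7 m φ → 0 < w → Homog17 g m w φ → cobound7 m πm hπmem φ ∈ I := by
    intro φ w hφ hw hφw
    rw [hI, imDel7_eq_span]
    exact Submodule.subset_span ⟨φ, ⟨hφ, w, hw, hφw⟩, rfl⟩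
  let N : Submodule ℝ (m → m → L) :=
    { carrier := {ψ | ψ ∈ C2plus7 g m ∧ ∀ χ ∈ I, b ψ χ = 0}
      zero_mem' := ⟨Submodule.zero_mem _, by simp⟩
      add_mem' := fun h h' => ⟨Submodule.add_mem _ h.1 h'.1, fun χ hχ => by
        rw [map_add, LinearMap.add_apply, h.2 χ hχ, h'.2 χ hχ, add_zero]⟩
      smul_mem' := fun c _ h => ⟨Submodule.smul_mem _ c h.1, fun χ hχ => by
        rw [map_smul, LinearMap.smul_apply, h.2 χ hχ, smul_zero]⟩ }
  refine ⟨N, fun ψ hψ => hψ.1, ?_, le_antisymm ?_ ?_, le_antisymm ?_ ?_, ?_⟩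
  · intro A ψ hψ
    have hψalt := isAlt7_of_mem_C2plus7 hψ.1
    suffices h : k ≤ N.comap (act27Linear πm hπmem hψalt) from h A.2
    rw [hkgraded]
    refine iSup₂_le fun r hr A hA => ?_
    have hr0 : 0 ≤ r := hr
    refine ⟨act27_mem_C2plus7 (hπ := hπmem) hbr hπneg hπnonneg hψ.1 hr0 hA.2, hgen _ ?_⟩
    intro φ w hφ hw hφw
    have hZ := hτ r hr0 ⟨A, hA.1⟩ hA.2
    have hφZ := hφw.actOne_of_nonpos (hπ := hπmem) hbr hπneg (by omega) hZ
    have hmove : b (act27 m πm hπmem A ψ) (cobound7 m πm hπmem φ) =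
        b ψ (cobound7 m πm hπmem (actOne πm hπmem (τ ⟨A, hA.1⟩) φ)) := by
      rw [← act27_cobound7 hφ _ (hnorm (-r) (by omega) _ hZ) hmm hπ1]
      exact cochainForm_act27 hBsymm hexp (hcomp ⟨A, hA.1⟩) (hadj ⟨A, hA.1⟩) hψalt hφ.cobound7
    refine hmove.trans ?_
    rcases lt_or_ge 0 (w + -r) with hpos | hneg
    · exact hψ.2 _ (hmemI _ _ (hφ.actOne _) hpos hφZ)
    -- coboundaries of nonpositive weight are orthogonal to `C²₊`
    suffices h : C2plus7 g m ≤ LinearMap.ker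
        (b.flip (cobound7 m πm hπmem (actOne πm hπmem (τ ⟨A, hA.1⟩) φ))) from h hψ.1
    refine Submodule.span_le.mpr ?_
    rintro χ ⟨-, w', hw', hχ⟩
    exact cochainForm_eq_zero_of_weight_ne hBorth hd hf (by omega) hχ
      (hφZ.cobound7 hbr hπneg)
  · intro ψ hψ
    have hψV := hψ.1
    rw [C2plus7_eq_iSup, Submodule.mem_iSup_iff_exists_finsupp] at hψV
    obtain ⟨c, hc, hsum⟩ := hψV
    rw [← hsum]
    refine Submodule.sum_mem _ fun w _ => Submodule.subset_span ⟨⟨?_, hgen _ ?_⟩, w, (hc w).2⟩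
    · exact Submodule.subset_span ⟨(hc w).1, w, w.2, (hc w).2⟩
    intro φ w' hφ hw' hφw'
    have horth : ∀ v : {w : ℤ // 0 < w}, (v : ℤ) ≠ w' →
        b (c v) (cobound7 m πm hπmem φ) = 0 := fun v hv =>
      cochainForm_eq_zero_of_weight_ne hBorth hd hf hv (hc v).2 (hφw'.cobound7 hbr hπneg)
    by_cases hww : (w : ℤ) = w'
    · have htot := hψ.2 _ (hmemI φ w' hφ hw' hφw')
      rw [← hsum, Finsupp.sum, map_sum, LinearMap.sum_apply, Finset.sum_eq_single w] at htot
      · exact htot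
      · exact fun v _ hv => horth v fun h => hv (Subtype.ext (h.trans hww.symm))
      · intro hw
        rw [Finsupp.notMem_support_iff.mp hw, map_zero, LinearMap.zero_apply]
    · exact horth w hww
  · exact Submodule.span_le.mpr fun ψ hψ => hψ.1
  · exact sup_le (fun ψ hψ => hψ.1) hIV
  · intro ψ hψ
    have : FiniteDimensional ℝ I := Submodule.finiteDimensional_of_le hIV
    obtain ⟨χ, hχ, horth⟩ := exists_mem_sub_orthogonal b I (fun x hx => hbdef x (hIV hx)) ψ
    rw [← sub_add_cancel ψ χ]
    exact Submodule.add_mem_sup ⟨Submodule.sub_mem _ hψ (hIV hχ), horth⟩ hχ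
  · rw [Submodule.disjoint_def]
    exact fun ψ hψ hψI => hbdef ψ hψ.1 (hψ.2 ψ hψI)
end
end

section
/- With the grading of g given by wght(Y) = 1, wght(H) = wght(E) = 0, wght(X) = −1, wght(ε_i) = −i, wght(η) = 5−2n (so that m = span{X, ε_1, …, ε_{2n−6}, η} and g⁰ = span{Y, H, E}), there exists a linear invariant normalization condition for (m, g): a linear subspace N ⊆ C²₊(m,g), invariant under the g⁰-action, spanned by weight-homogeneous elements, with C²₊(m,g) = N ⊕ ∂(C¹₊(m,g)). -/
noncomputable section

open scoped BigOperators

/-- The underlying vector space of `gl₂(ℝ)`, with basis `Y, H, E, X` at indices `0,1,2,3`. -/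
abbrev G2 : Type := Fin 4 → ℝ

/-- The underlying vector space of the Heisenberg algebra `heis_{2n-5}`:
coefficients of `ε_1, …, ε_{2n-6}` together with the coefficient of `η`. -/
abbrev Hs (n : ℕ) : Type := (Fin (2*n-6) → ℝ) × ℝ

/-- The underlying vector space of `g = gl₂(ℝ) ⋉ heis_{2n-5}`. -/
abbrev Gg (n : ℕ) : Type := G2 × Hs n

/-- The basis vector `ε_p` (1-based index `p`). -/
def epsV (n : ℕ) (p : ℕ) : Hs n := (fun i => if i.val + 1 = p then 1 else 0, 0)

/-- The central basis vector `η`. -/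
def etaV (n : ℕ) : Hs n := (0, 1)

/-- The Heisenberg bracket, encoding `[ε_i, ε_{2n-5-i}] = (-1)^i η`. -/
def heisBr (n : ℕ) (x y : Hs n) : Hs n :=
  (0, ∑ i : Fin (2*n-6), (-1 : ℝ)^(i.val+1) * x.1 i * y.1 i.rev)

/-- The `gl₂(ℝ)` bracket: `[X,Y]=H`, `[H,X]=2X`, `[H,Y]=-2Y`, and `E` is central. -/
def gl2Br (a b : G2) : G2 :=
  ![-2*(a 1 * b 0 - a 0 * b 1), a 3 * b 0 - a 0 * b 3, 0, 2*(a 1 * b 3 - a 3 * b 1)]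

/-- The map `φ : gl₂(ℝ) → End(heis_{2n-5})` from the paper. -/
def phi (n : ℕ) (a : G2) (v : Hs n) : Hs n :=
  (fun i =>
      a 1 * (2*(i.val:ℝ) + 7 - 2*(n:ℝ)) * v.1 i
    + a 2 * v.1 i
    + a 3 * (if h : 0 < i.val then v.1 ⟨i.val - 1, by have := i.isLt; omega⟩ else 0)
    + a 0 * (((i.val:ℝ)+1) * (2*(n:ℝ) - 7 - (i.val:ℝ))) *
        (if h : i.val + 1 < 2*n-6 then v.1 ⟨i.val+1, h⟩ else 0),
   2 * a 2 * v.2)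

/-- The bracket of the semidirect product `g = gl₂(ℝ) ⋉_φ heis_{2n-5}`. -/
def gBr (n : ℕ) (x y : Gg n) : Gg n :=
  (gl2Br x.1 y.1, phi n x.1 y.2 - phi n y.1 x.2 + heisBr n x.2 y.2)

def bY (n : ℕ) : Gg n := (![1,0,0,0], 0)
def bH (n : ℕ) : Gg n := (![0,1,0,0], 0)
def bE (n : ℕ) : Gg n := (![0,0,1,0], 0)
def bX (n : ℕ) : Gg n := (![0,0,0,1], 0)
def bEps (n : ℕ) (p : ℕ) : Gg n := (0, epsV n p)
def bEta (n : ℕ) : Gg n := (0, etaV n)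

/-- The weight-`w` graded component of `g` in the grading of `s^{k,n}`: the span of the
basis elements of weight `w`, where `wght Y = 1`, `wght H = wght E = 0`, `wght X = -1`,
`wght ε_p = n-4-k-p`, `wght η = -3-2k`. -/
def gComp (n k : ℕ) (w : ℤ) : Submodule ℝ (Gg n) :=
  Submodule.span ℝ {v : Gg n |
    (v = bY n ∧ w = 1) ∨ ((v = bH n ∨ v = bE n) ∧ w = 0) ∨ (v = bX n ∧ w = -1) ∨
    (∃ p : ℕ, 1 ≤ p ∧ p ≤ 2*n-6 ∧ v = bEps n p ∧ w = (n:ℤ) - 4 - (k:ℤ) - (p:ℤ)) ∨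
    (v = bEta n ∧ w = -3 - 2*(k:ℤ))}

/-- The negative part `m = s^{k,n}` of `g` (for `0 ≤ k ≤ n-4`): the span of the basis
elements of negative weight, i.e. of `X`, `ε_p` for `n-3-k ≤ p ≤ 2n-6`, and `η`. -/
def mSub (n k : ℕ) : Submodule ℝ (Gg n) where
  carrier := {x | x.1 0 = 0 ∧ x.1 1 = 0 ∧ x.1 2 = 0 ∧
    ∀ i : Fin (2*n-6), ((i.val:ℤ) + 1 < (n:ℤ) - 3 - (k:ℤ) → x.2.1 i = 0)}
  add_mem' := by
    rintro a b ⟨ha0, ha1, ha2, ha3⟩ ⟨hb0, hb1, hb2, hb3⟩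
    exact ⟨by simp [ha0, hb0], by simp [ha1, hb1], by simp [ha2, hb2],
      fun i hi => by simp [ha3 i hi, hb3 i hi]⟩
  zero_mem' := ⟨rfl, rfl, rfl, fun i _ => rfl⟩
  smul_mem' := by
    rintro c a ⟨ha0, ha1, ha2, ha3⟩
    exact ⟨by simp [ha0], by simp [ha1], by simp [ha2], fun i hi => by simp [ha3 i hi]⟩

/-- The non-negative part `g⁰` of `g` in the grading of `s^{k,n}`. -/
def g0Sub (n k : ℕ) : Submodule ℝ (Gg n) where
  carrier := {x | x.1 3 = 0 ∧ x.2.2 = 0 ∧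
    ∀ i : Fin (2*n-6), ((n:ℤ) - 3 - (k:ℤ) ≤ (i.val:ℤ) + 1 → x.2.1 i = 0)}
  add_mem' := by
    rintro a b ⟨ha0, ha1, ha3⟩ ⟨hb0, hb1, hb3⟩
    exact ⟨by simp [ha0, hb0], by simp [ha1, hb1], fun i hi => by simp [ha3 i hi, hb3 i hi]⟩
  zero_mem' := ⟨rfl, rfl, fun i _ => rfl⟩
  smul_mem' := by
    rintro c a ⟨ha0, ha1, ha3⟩
    exact ⟨by simp [ha0], by simp [ha1], fun i hi => by simp [ha3 i hi]⟩

/-- The negative part `m` of `g`, as a type. -/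
abbrev MT (n k : ℕ) := ↥(mSub n k)

/-- The projection `π_m : g → m` along `g⁰`. -/
def Pm (n k : ℕ) (x : Gg n) : Gg n :=
  (![0, 0, 0, x.1 3],
   (fun i => if (n:ℤ) - 3 - (k:ℤ) ≤ (i.val:ℤ) + 1 then x.2.1 i else 0, x.2.2))

lemma Pm_mem (n k : ℕ) (x : Gg n) : Pm n k x ∈ mSub n k := by
  refine ⟨?_, ?_, ?_, fun i hi => ?_⟩
  · simp [Pm]
  · simp [Pm]
  · simp [Pm]
  · show (if (n:ℤ) - 3 - (k:ℤ) ≤ (i.val:ℤ) + 1 then x.2.1 i else 0) = 0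
    rw [if_neg (by omega)]

/-- The projection `π_m : g → m`, viewed as a map into `m`. -/
def ptoM (n k : ℕ) (x : Gg n) : MT n k := ⟨Pm n k x, Pm_mem n k x⟩

/-- The Lie bracket of `m` (the bracket of `g` restricted to `m`; since `m` is closed
under the bracket, composing with the projection `π_m` does not change the value). -/
def mBrM (n k : ℕ) (x y : MT n k) : MT n k := ptoM n k (gBr n x.1 y.1)

/-- `ψ` is an ℝ-linear map `m → g`, i.e. an element of `C¹(m,g)`. -/
def IsLin1 (n k : ℕ) (ψ : MT n k → Gg n) : Prop :=
  (∀ x y, ψ (x + y) = ψ x + ψ y) ∧ ∀ (c : ℝ) (x), ψ (c • x) = c • ψ x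

/-- `ψ` is an alternating ℝ-bilinear map `m × m → g`, i.e. an element of `C²(m,g)`. -/
def IsAlt2 (n k : ℕ) (ψ : MT n k → MT n k → Gg n) : Prop :=
  (∀ y, IsLin1 n k (fun x => ψ x y)) ∧ (∀ x, IsLin1 n k (ψ x)) ∧ ∀ x, ψ x x = 0

/-- The coboundary `∂ : C¹(m,g) → C²(m,g)`,
`(∂φ)(x,y) = [x, φ y] - [y, φ x] + φ [x,y]`. -/
def cobound (n k : ℕ) (φ : MT n k → Gg n) : MT n k → MT n k → Gg n :=
  fun x y => gBr n x.1 (φ y) - gBr n y.1 (φ x) + φ (mBrM n k x y)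

/-- A 1-cochain is homogeneous of weight `w` if `ψ(g_p) ⊆ g_{p+w}` for all `p < 0`. -/
def Homog1 (n k : ℕ) (w : ℤ) (ψ : MT n k → Gg n) : Prop :=
  ∀ p : ℤ, p < 0 → ∀ x : MT n k, (x : Gg n) ∈ gComp n k p → ψ x ∈ gComp n k (p + w)

/-- A 2-cochain is homogeneous of weight `w` if `ψ(g_p × g_q) ⊆ g_{p+q+w}` for `p,q < 0`. -/
def Homog2 (n k : ℕ) (w : ℤ) (ψ : MT n k → MT n k → Gg n) : Prop :=
  ∀ p q : ℤ, p < 0 → q < 0 → ∀ x y : MT n k,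
    (x : Gg n) ∈ gComp n k p → (y : Gg n) ∈ gComp n k q → ψ x y ∈ gComp n k (p + q + w)

/-- `C¹₊(m,g)`: the span of the homogeneous 1-cochains of positive weight. -/
def C1plus (n k : ℕ) : Submodule ℝ (MT n k → Gg n) :=
  Submodule.span ℝ {ψ | IsLin1 n k ψ ∧ ∃ w : ℤ, 0 < w ∧ Homog1 n k w ψ}

/-- `C²₊(m,g)`: the span of the homogeneous alternating 2-cochains of positive weight. -/
def C2plus (n k : ℕ) : Submodule ℝ (MT n k → MT n k → Gg n) :=
  Submodule.span ℝ {ψ | IsAlt2 n k ψ ∧ ∃ w : ℤ, 0 < w ∧ Homog2 n k w ψ}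

/-- The image `∂(C¹₊(m,g)) ⊆ C²(m,g)`. -/
def imDel (n k : ℕ) : Submodule ℝ (MT n k → MT n k → Gg n) :=
  Submodule.span ℝ (cobound n k '' {φ | φ ∈ C1plus n k})

/-- The action of `A ∈ g⁰` on 1-cochains: `(A·ψ)(x) = [A, ψ x] - ψ(π_m [A, x])`. -/
def act1 (n k : ℕ) (A : Gg n) (ψ : MT n k → Gg n) : MT n k → Gg n :=
  fun x => gBr n A (ψ x) - ψ (ptoM n k (gBr n A x.1))

/-- The action of `A ∈ g⁰` on 2-cochains:
`(A·ψ)(x,y) = [A, ψ x y] - ψ(π_m [A, x]) y - ψ x (π_m [A, y])`. -/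
def act2 (n k : ℕ) (A : Gg n) (ψ : MT n k → MT n k → Gg n) : MT n k → MT n k → Gg n :=
  fun x y => gBr n A (ψ x y) - ψ (ptoM n k (gBr n A x.1)) y - ψ x (ptoM n k (gBr n A y.1))

/-- The coefficient of `ε_p` (the dual functional `ε*_p`). -/
def epsCoef (n : ℕ) (p : ℕ) (x : Gg n) : ℝ :=
  if h : 1 ≤ p ∧ p ≤ 2*n-6 then x.2.1 ⟨p-1, by omega⟩ else 0

/-- The 1-cochain `ε*_{n-3-k} ⊗ ε_{2n-6}`. -/
def cA (n k : ℕ) : MT n k → Gg n := fun x => epsCoef n (n-3-k) x.1 • bEps n (2*n-6)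

/-- The 1-cochain `X* ⊗ ε_{n-4-k}`. -/
def cB (n k : ℕ) : MT n k → Gg n := fun x => (x : Gg n).1 3 • bEps n (n-4-k)

/-- The 2-cochain `X* ∧ ε*_{n-1+k} ⊗ η`. -/
def cC (n k : ℕ) : MT n k → MT n k → Gg n := fun x y =>
  ((x : Gg n).1 3 * epsCoef n (n-1+k) y.1 - (y : Gg n).1 3 * epsCoef n (n-1+k) x.1) • bEta n

/-- The 2-cochain `ε*_{n-3-k} ∧ η* ⊗ ε_{2n-6}`. -/
def cD (n k : ℕ) : MT n k → MT n k → Gg n := fun x y =>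
  (epsCoef n (n-3-k) x.1 * (y : Gg n).2.2 - epsCoef n (n-3-k) y.1 * (x : Gg n).2.2) • bEps n (2*n-6)

set_option synthInstance.maxHeartbeats 1000000

lemma sum_fin_shift (N : ℕ) (F : Fin N → Fin N → ℝ) :
    ∑ i : Fin N, (if h : 0 < i.val then F ⟨i.val - 1, by have := i.isLt; omega⟩ i else 0) =
      ∑ i : Fin N, (if h : i.val + 1 < N then F i ⟨i.val + 1, h⟩ else 0) := by
  cases N with
  | zero => simp
  | succ M =>
    rw [Fin.sum_univ_succ, Fin.sum_univ_castSucc]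
    simp
    rfl

section Bracket

variable {n : ℕ}

lemma gl2Br_add_left (a b c : G2) : gl2Br (a + b) c = gl2Br a c + gl2Br b c := by
  ext j; fin_cases j <;> simp [gl2Br] <;> ring

lemma gl2Br_add_right (a b c : G2) : gl2Br a (b + c) = gl2Br a b + gl2Br a c := by
  ext j; fin_cases j <;> simp [gl2Br] <;> ring

lemma gl2Br_smul_left (r : ℝ) (a b : G2) : gl2Br (r • a) b = r • gl2Br a b := by
  ext j; fin_cases j <;> simp [gl2Br] <;> ring

lemma gl2Br_smul_right (r : ℝ) (a b : G2) : gl2Br a (r • b) = r • gl2Br a b := by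
  ext j; fin_cases j <;> simp [gl2Br] <;> ring

lemma phi_add_left (a b : G2) (v : Hs n) : phi n (a + b) v = phi n a v + phi n b v := by
  ext i
  · simp only [phi, Pi.add_apply, Prod.fst_add]; ring
  · simp only [phi, Pi.add_apply, Prod.snd_add]; ring

lemma phi_smul_left (r : ℝ) (a : G2) (v : Hs n) : phi n (r • a) v = r • phi n a v := by
  ext i
  · simp only [phi, Pi.smul_apply, Prod.smul_fst, smul_eq_mul]; ring
  · simp only [phi, Pi.smul_apply, Prod.smul_snd, smul_eq_mul]; ring

lemma phi_add_right (a : G2) (u v : Hs n) : phi n a (u + v) = phi n a u + phi n a v := by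
  ext i
  · simp only [phi, Pi.add_apply, Prod.fst_add]; split_ifs <;> ring
  · simp only [phi, Prod.snd_add]; ring

lemma phi_smul_right (r : ℝ) (a : G2) (v : Hs n) : phi n a (r • v) = r • phi n a v := by
  ext i
  · simp only [phi, Pi.smul_apply, Prod.smul_fst, smul_eq_mul]; split_ifs <;> ring
  · simp only [phi, Prod.smul_snd, smul_eq_mul]; ring

lemma heisBr_add_left (u v w : Hs n) : heisBr n (u + v) w = heisBr n u w + heisBr n v w := by
  ext i
  · simp [heisBr]
  · simp only [heisBr, Prod.snd_add, Prod.fst_add, Pi.add_apply, ← Finset.sum_add_distrib]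
    exact Finset.sum_congr rfl fun i _ => by ring

lemma heisBr_add_right (u v w : Hs n) : heisBr n u (v + w) = heisBr n u v + heisBr n u w := by
  ext i
  · simp [heisBr]
  · simp only [heisBr, Prod.snd_add, Prod.fst_add, Pi.add_apply, ← Finset.sum_add_distrib]
    exact Finset.sum_congr rfl fun i _ => by ring

lemma heisBr_smul_left (r : ℝ) (u v : Hs n) : heisBr n (r • u) v = r • heisBr n u v := by
  ext i
  · simp [heisBr]
  · simp only [heisBr, Prod.smul_snd, Prod.smul_fst, Pi.smul_apply, smul_eq_mul, Finset.mul_sum]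
    exact Finset.sum_congr rfl fun i _ => by ring

lemma heisBr_smul_right (r : ℝ) (u v : Hs n) : heisBr n u (r • v) = r • heisBr n u v := by
  ext i
  · simp [heisBr]
  · simp only [heisBr, Prod.smul_snd, Prod.smul_fst, Pi.smul_apply, smul_eq_mul, Finset.mul_sum]
    exact Finset.sum_congr rfl fun i _ => by ring

lemma heisBr_self (u : Hs n) : heisBr n u u = 0 := by
  ext i
  · simp [heisBr]
  · simp only [heisBr, Prod.snd_zero]
    set S := ∑ i : Fin (2*n-6), (-1 : ℝ)^(i.val+1) * u.1 i * u.1 i.rev with hS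
    have h : S = -S := by
      rw [hS, ← Finset.sum_neg_distrib, ← Equiv.sum_comp Fin.revPerm]
      refine Finset.sum_congr rfl fun i _ => ?_
      have hi := i.isLt
      have hrev : i.rev.val = 2*n-6-(i.val+1) := Fin.val_rev i
      have hpow : (-1 : ℝ)^(i.rev.val+1) = -(-1 : ℝ)^(i.val+1) := by
        rcases Nat.even_or_odd (i.val+1) with he | ho
        · have : Odd (i.rev.val+1) := by
            rw [hrev]; obtain ⟨c, hc⟩ := he; exact ⟨n-3-c, by omega⟩
          rw [he.neg_one_pow, this.neg_one_pow]
        · have : Even (i.rev.val+1) := by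
            rw [hrev]; obtain ⟨c, hc⟩ := ho; exact ⟨n-3-c, by omega⟩
          rw [ho.neg_one_pow, this.neg_one_pow]; ring
      simp only [Fin.revPerm_apply, Fin.rev_rev, hpow]
      ring
    linarith

/-- The bracket of `g` as a bilinear map. -/
def gBrL (n : ℕ) : Gg n →ₗ[ℝ] Gg n →ₗ[ℝ] Gg n :=
  LinearMap.mk₂ ℝ (gBr n)
    (fun x y z => by
      ext1
      · exact gl2Br_add_left _ _ _
      · simp only [gBr, Prod.fst_add, Prod.snd_add, phi_add_left, phi_add_right,
          heisBr_add_left]; abel)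
    (fun r x y => by
      ext1
      · exact gl2Br_smul_left _ _ _
      · simp only [gBr, Prod.smul_fst, Prod.smul_snd, phi_smul_left, phi_smul_right,
          heisBr_smul_left, smul_add, smul_sub])
    (fun x y z => by
      ext1
      · exact gl2Br_add_right _ _ _
      · simp only [gBr, Prod.fst_add, Prod.snd_add, phi_add_left, phi_add_right,
          heisBr_add_right]; abel)
    (fun r x y => by
      ext1
      · exact gl2Br_smul_right _ _ _
      · simp only [gBr, Prod.smul_fst, Prod.smul_snd, phi_smul_left, phi_smul_right,
          heisBr_smul_right, smul_add, smul_sub])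

lemma gBr_eq (x y : Gg n) : gBr n x y = gBrL n x y := rfl

lemma gBr_self (x : Gg n) : gBr n x x = 0 := by
  ext1
  · ext j; fin_cases j <;> simp [gBr, gl2Br] <;> ring
  · simp [gBr, heisBr_self]

lemma phi_gl2Br (hn : 4 ≤ n) (s b : G2) (hs : s 0 = 0) (v : Hs n) :
    phi n (gl2Br s b) v = phi n s (phi n b v) - phi n b (phi n s v) := by
  ext i
  · have hi := i.isLt
    have hc : ((2*n-6 : ℕ) : ℝ) = 2*(n:ℝ) - 6 := by
      rw [Nat.cast_sub (by omega)]; push_cast; ring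
    rcases Nat.eq_zero_or_pos i.val with h0 | h0
    · have h1 : 1 < 2*n-6 := by omega
      simp [phi, gl2Br, hs, h0, h1]
      ring
    · have hcast : ((i.val - 1 : ℕ) : ℝ) = (i.val : ℝ) - 1 := by
        rw [Nat.cast_sub (by omega)]; simp
      have h3 : i.val - 1 + 1 = i.val := by omega
      by_cases h1 : i.val + 1 < 2*n-6
      · simp [phi, gl2Br, hs, h0, h1, hcast, h3]
        split_ifs <;> ring
      · have : (i.val : ℝ) = 2*(n:ℝ) - 7 := by
          have : i.val + 1 = 2*n-6 := by omega
          have := congrArg (Nat.cast (R := ℝ)) this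
          rw [hc] at this; push_cast at this; linarith
        simp [phi, gl2Br, hs, h0, h1, hcast, h3]
        rw [this]
        split_ifs <;> ring
  · simp only [phi, gl2Br, Prod.snd_sub]
    simp
    ring

lemma phi_heisBr (s : G2) (hs : s 0 = 0) (u v : Hs n) :
    phi n s (heisBr n u v) = heisBr n (phi n s u) v + heisBr n u (phi n s v) := by
  ext i
  · simp [phi, heisBr]
  · simp only [phi, heisBr, Prod.snd_add, hs]
    have key : ∑ i : Fin (2*n-6), (-1 : ℝ)^(i.val+1) *
          (if h : 0 < i.val then u.1 ⟨i.val - 1, by have := i.isLt; omega⟩ else 0) * v.1 i.rev +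
        ∑ i : Fin (2*n-6), (-1 : ℝ)^(i.val+1) * u.1 i *
          (if h : 0 < i.rev.val then
            v.1 ⟨i.rev.val - 1, by have := i.rev.isLt; omega⟩ else 0) = 0 := by
      have h := sum_fin_shift (2*n-6) (fun i j => (-1 : ℝ)^(j.val+1) * u.1 i * v.1 j.rev)
      have h' : ∑ i : Fin (2*n-6), (-1 : ℝ)^(i.val+1) *
          (if h : 0 < i.val then u.1 ⟨i.val - 1, by have := i.isLt; omega⟩ else 0) * v.1 i.rev =
          ∑ i : Fin (2*n-6), (if h : 0 < i.val then (-1 : ℝ)^(i.val+1) *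
            u.1 ⟨i.val - 1, by have := i.isLt; omega⟩ * v.1 i.rev else 0) :=
        Finset.sum_congr rfl fun i _ => by split_ifs <;> simp
      rw [h', h, ← Finset.sum_add_distrib]
      refine Finset.sum_eq_zero fun i _ => ?_
      have hi := i.isLt
      have hrev : i.rev.val = 2*n-6-(i.val+1) := Fin.val_rev i
      by_cases h1 : i.val + 1 < 2*n-6
      · have h2 : 0 < i.rev.val := by omega
        have h3 : (⟨i.val + 1, h1⟩ : Fin (2*n-6)).rev =
            ⟨i.rev.val - 1, by have := i.rev.isLt; omega⟩ := by
          ext; simp only [Fin.val_rev]; omega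
        simp only [h1, h2, dif_pos, h3, pow_succ]; ring
      · have h2 : ¬ 0 < i.rev.val := by omega
        simp only [h1, h2, dif_neg, not_false_eq_true]; ring
    have hc (i : Fin (2*n-6)) : ((i.rev : ℕ) : ℝ) = 2*(n:ℝ) - 7 - (i.val : ℝ) := by
      have hi := i.isLt
      have h1 : i.rev.val + i.val + 7 = 2*n := by rw [Fin.val_rev]; omega
      have h2 := congrArg (Nat.cast (R := ℝ)) h1
      push_cast at h2
      linarith
    have key' := congrArg (fun t => s 3 * t) key
    simp only [mul_zero, mul_add, Finset.mul_sum] at key'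
    refine sub_eq_zero.1 (neg_eq_zero.1 (Eq.trans ?_ key'))
    simp only [Finset.mul_sum, ← Finset.sum_add_distrib, ← Finset.sum_sub_distrib,
      ← Finset.sum_neg_distrib, zero_mul, add_zero]
    exact Finset.sum_congr rfl fun i _ => by rw [hc]; ring

lemma gBr_derivation (hn : 4 ≤ n) (S x y : Gg n) (hS : S.2 = 0) (hS0 : S.1 0 = 0) :
    gBr n S (gBr n x y) = gBr n (gBr n S x) y + gBr n x (gBr n S y) := by
  have hz (a : G2) : phi n a 0 = 0 := by ext i <;> simp [phi]
  have hz' (a : Hs n) : heisBr n 0 a = 0 := by ext i <;> simp [heisBr]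
  have hsub (a : G2) (u v : Hs n) : phi n a (u - v) = phi n a u - phi n a v := by
    rw [sub_eq_add_neg, phi_add_right, ← neg_one_smul ℝ v, phi_smul_right]; simp [sub_eq_add_neg]
  ext1
  · ext j; fin_cases j <;> simp [gBr, gl2Br] <;> ring
  · simp only [gBr, hS, hz, hz', Prod.snd_add, sub_zero, add_zero, phi_gl2Br hn _ _ hS0,
      phi_add_right, hsub, phi_heisBr _ hS0]
    abel

end Bracket

section Grading

variable {n k : ℕ}

lemma mem_gComp_iff (h : k + 4 = n) (w : ℤ) (x : Gg n) :
    x ∈ gComp n k w ↔ (x.1 0 = 0 ∨ w = 1) ∧ (x.1 1 = 0 ∨ w = 0) ∧ (x.1 2 = 0 ∨ w = 0) ∧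
      (x.1 3 = 0 ∨ w = -1) ∧ (∀ i, x.2.1 i = 0 ∨ w = -((i.val : ℤ) + 1)) ∧
      (x.2.2 = 0 ∨ w = 5 - 2 * (n : ℤ)) := by
  constructor
  · intro hx
    induction hx using Submodule.span_induction with
    | mem x hx =>
      rcases hx with ⟨rfl, hw⟩ | ⟨rfl | rfl, hw⟩ | ⟨rfl, hw⟩ | ⟨p, hp1, hp2, rfl, hw⟩ | ⟨rfl, hw⟩
      · simp [bY, hw]
      · simp [bH, hw]
      · simp [bE, hw]
      · simp [bX, hw]
      · simp only [bEps, epsV]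
        refine ⟨by simp, by simp, by simp, by simp, fun i => ?_, by simp⟩
        by_cases hi : i.val + 1 = p
        · right; omega
        · left; simp [hi]
      · simp only [bEta, etaV]
        refine ⟨by simp, by simp, by simp, by simp, fun i => by simp, ?_⟩
        right; omega
    | zero => simp
    | add x y _ _ hx hy =>
      obtain ⟨a0, a1, a2, a3, a4, a5⟩ := hx
      obtain ⟨b0, b1, b2, b3, b4, b5⟩ := hy
      have aux {s t : ℝ} {P : Prop} (h1 : s = 0 ∨ P) (h2 : t = 0 ∨ P) : s + t = 0 ∨ P := by
        rcases h1 with h1 | h1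
        · rcases h2 with h2 | h2
          · left; simp [h1, h2]
          · exact Or.inr h2
        · exact Or.inr h1
      exact ⟨aux a0 b0, aux a1 b1, aux a2 b2, aux a3 b3, fun i => aux (a4 i) (b4 i), aux a5 b5⟩
    | smul c x _ hx =>
      obtain ⟨a0, a1, a2, a3, a4, a5⟩ := hx
      have aux {s : ℝ} {P : Prop} (h1 : s = 0 ∨ P) : c * s = 0 ∨ P :=
        h1.imp_left fun h => by simp [h]
      exact ⟨aux a0, aux a1, aux a2, aux a3, fun i => aux (a4 i), aux a5⟩
  · rintro ⟨a0, a1, a2, a3, a4, a5⟩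
    have hdec : x = x.1 0 • bY n + x.1 1 • bH n + x.1 2 • bE n + x.1 3 • bX n +
        ∑ i : Fin (2*n-6), x.2.1 i • bEps n (i.val + 1) + x.2.2 • bEta n := by
      ext j
      · simp only [Prod.fst_add, Prod.fst_sum, Pi.add_apply, Finset.sum_apply]
        fin_cases j <;> simp [bY, bH, bE, bX, bEps, bEta]
      · simp [bY, bH, bE, bX, bEps, bEta, epsV, etaV, Prod.snd_sum, Prod.fst_sum,
          Finset.sum_apply, Fin.val_inj]
      · simp [bY, bH, bE, bX, bEps, bEta, epsV, etaV, Prod.snd_sum]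
    have aux {c : ℝ} {v : Gg n} {P : Prop} (h1 : c = 0 ∨ P) (h2 : P → v ∈ gComp n k w) :
        c • v ∈ gComp n k w := by
      rcases h1 with h1 | h1
      · simp [h1]
      · exact Submodule.smul_mem _ _ (h2 h1)
    rw [hdec]
    refine add_mem (add_mem (add_mem (add_mem (add_mem ?_ ?_) ?_) ?_) (sum_mem fun i _ => ?_)) ?_
    · exact aux a0 fun hw => Submodule.subset_span (by simp [hw])
    · exact aux a1 fun hw => Submodule.subset_span (by simp [hw])
    · exact aux a2 fun hw => Submodule.subset_span (by simp [hw])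
    · exact aux a3 fun hw => Submodule.subset_span (by simp [hw])
    · refine aux (a4 i) fun hw => Submodule.subset_span ?_
      have := i.isLt
      exact Or.inr (Or.inr (Or.inr (Or.inl ⟨i.val + 1, by omega, by omega, rfl, by omega⟩)))
    · refine aux a5 fun hw => Submodule.subset_span ?_
      exact Or.inr (Or.inr (Or.inr (Or.inr ⟨rfl, by omega⟩)))

lemma gBr_mem_gComp (h : k + 4 = n) {p q : ℤ} {x y : Gg n} (hx : x ∈ gComp n k p)
    (hy : y ∈ gComp n k q) : gBr n x y ∈ gComp n k (p + q) := by
  rw [mem_gComp_iff h] at hx hy ⊢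
  obtain ⟨a0, a1, a2, a3, a4, a5⟩ := hx
  obtain ⟨b0, b1, b2, b3, b4, b5⟩ := hy
  have aux {s t : ℝ} {c d e : ℤ} (h1 : s = 0 ∨ p = c) (h2 : t = 0 ∨ q = d) (hne : c + d = e)
      (he : p + q ≠ e) : s * t = 0 := by
    rcases h1 with h1 | h1
    · simp [h1]
    · rcases h2 with h2 | h2
      · simp [h2]
      · exact absurd (by rw [h1, h2, hne]) he
  have key {c : ℝ} {e : ℤ} (hc : p + q ≠ e → c = 0) : c = 0 ∨ p + q = e := by
    by_cases he : p + q = e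
    · exact Or.inr he
    · exact Or.inl (hc he)
  refine ⟨key fun he => ?_, key fun he => ?_, key fun he => ?_, key fun he => ?_,
    fun i => key fun he => ?_, key fun he => ?_⟩
  · simp [gBr, gl2Br, aux a1 b0 (by ring) he, aux a0 b1 (by ring) he]
  · simp [gBr, gl2Br, aux a3 b0 (by ring) he, aux a0 b3 (by ring) he]
  · simp [gBr, gl2Br]
  · simp [gBr, gl2Br, aux a1 b3 (by ring) he, aux a3 b1 (by ring) he]
  · have e1 := aux a1 (b4 i) (by ring) he
    have e2 := aux a2 (b4 i) (by ring) he
    have e1' := aux (a4 i) b1 (by ring) he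
    have e2' := aux (a4 i) b2 (by ring) he
    have e3 : x.1 3 * (if h : 0 < i.val then
        y.2.1 ⟨i.val - 1, by have := i.isLt; omega⟩ else 0) = 0 := by
      split_ifs with hi
      · exact aux a3 (b4 _) (by simp only; omega) he
      · simp
    have e3' : (if h : 0 < i.val then
        x.2.1 ⟨i.val - 1, by have := i.isLt; omega⟩ else 0) * y.1 3 = 0 := by
      split_ifs with hi
      · exact aux (a4 _) b3 (by simp only; omega) he
      · simp
    have e4 : x.1 0 * (if h : i.val + 1 < 2*n-6 then y.2.1 ⟨i.val + 1, h⟩ else 0) = 0 := by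
      split_ifs with hi
      · exact aux a0 (b4 _) (by simp only; omega) he
      · simp
    have e4' : (if h : i.val + 1 < 2*n-6 then x.2.1 ⟨i.val + 1, h⟩ else 0) * y.1 0 = 0 := by
      split_ifs with hi
      · exact aux (a4 _) b0 (by simp only; omega) he
      · simp
    simp only [gBr, phi, heisBr, Prod.fst_add, Prod.fst_sub, Pi.add_apply, Pi.sub_apply,
      Pi.zero_apply]
    linear_combination (2*(i.val:ℝ) + 7 - 2*(n:ℝ)) * e1 + e2 + e3 +
      (((i.val:ℝ)+1) * (2*(n:ℝ) - 7 - (i.val:ℝ))) * e4 - (2*(i.val:ℝ) + 7 - 2*(n:ℝ)) * e1' -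
      e2' - e3' - (((i.val:ℝ)+1) * (2*(n:ℝ) - 7 - (i.val:ℝ))) * e4'
  · have e1 := aux a2 b5 (by ring) he
    have e2 := aux a5 b2 (by ring) he
    have e3 : ∑ i : Fin (2*n-6), (-1 : ℝ)^(i.val+1) * x.2.1 i * y.2.1 i.rev = 0 := by
      refine Finset.sum_eq_zero fun i _ => ?_
      have hi := i.isLt
      rw [mul_assoc, aux (a4 i) (b4 i.rev) (by rw [Fin.val_rev]; omega) he, mul_zero]
    simp only [gBr, phi, heisBr, Prod.snd_add, Prod.snd_sub]
    linear_combination 2 * e1 - 2 * e2 + e3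

/-- The projection `π_m` as a linear map. -/
def ptoML (n k : ℕ) : Gg n →ₗ[ℝ] MT n k where
  toFun := ptoM n k
  map_add' x y := by
    ext i
    · simp only [ptoM, Pm, Submodule.coe_add, Prod.fst_add, Pi.add_apply]
      fin_cases i <;> simp
    · simp only [ptoM, Pm, Submodule.coe_add, Prod.snd_add, Prod.fst_add, Pi.add_apply]
      split_ifs <;> simp
    · simp [ptoM, Pm]
  map_smul' c x := by
    ext i
    · simp only [ptoM, Pm, Submodule.coe_smul, Prod.smul_fst, Pi.smul_apply, RingHom.id_apply]
      fin_cases i <;> simp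
    · simp only [ptoM, Pm, Submodule.coe_smul, Prod.smul_snd, Prod.smul_fst, Pi.smul_apply,
        RingHom.id_apply]
      split_ifs <;> simp
    · simp [ptoM, Pm]

lemma ptoM_eq (x : Gg n) : ptoM n k x = ptoML n k x := rfl

lemma Pm_eq (h : k + 4 = n) (x : Gg n) : Pm n k x = (![0, 0, 0, x.1 3], x.2) := by
  ext i
  · rfl
  · simp only [Pm]; rw [if_pos (by omega)]
  · rfl

lemma Pm_of_mem (h : k + 4 = n) {x : Gg n} (hx : x ∈ mSub n k) : Pm n k x = x := by
  obtain ⟨h0, h1, h2, -⟩ := hx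
  rw [Pm_eq h]
  ext i
  · fin_cases i <;> simp [h0, h1, h2]
  · rfl
  · rfl

lemma coe_ptoM_of_mem (h : k + 4 = n) {x : Gg n} (hx : x ∈ mSub n k) :
    (ptoM n k x : Gg n) = x := Pm_of_mem h hx

lemma mem_mSub (h : k + 4 = n) {x : Gg n} (h0 : x.1 0 = 0) (h1 : x.1 1 = 0) (h2 : x.1 2 = 0) :
    x ∈ mSub n k := ⟨h0, h1, h2, fun i hi => by omega⟩

lemma coe_ptoM_mem_gComp (h : k + 4 = n) {w : ℤ} {x : Gg n} (hx : x ∈ gComp n k w) :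
    (ptoM n k x : Gg n) ∈ gComp n k w := by
  change Pm n k x ∈ _
  rw [Pm_eq h]
  rw [mem_gComp_iff h] at hx ⊢
  obtain ⟨a0, a1, a2, a3, a4, a5⟩ := hx
  exact ⟨by simp, by simp, by simp, by simpa using a3, a4, a5⟩

lemma ptoM_eq_zero (h : k + 4 = n) (hn : 6 ≤ n) {w : ℤ} (hw : 0 ≤ w) {x : Gg n}
    (hx : x ∈ gComp n k w) : ptoM n k x = 0 := by
  rw [mem_gComp_iff h] at hx
  obtain ⟨a0, a1, a2, a3, a4, a5⟩ := hx
  apply Subtype.ext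
  change Pm n k x = 0
  rw [Pm_eq h]
  have h3 : x.1 3 = 0 := a3.resolve_right (by omega)
  ext i
  · fin_cases i <;> simp [h3]
  · exact (a4 i).resolve_right (by omega)
  · exact a5.resolve_right (by omega)

lemma gBr_mem_mSub (h : k + 4 = n) {S x : Gg n} (hS0 : S.1 0 = 0)
    (hx : x ∈ mSub n k) : gBr n S x ∈ mSub n k := by
  obtain ⟨h0, h1, h2, -⟩ := hx
  refine mem_mSub h ?_ ?_ ?_ <;> simp [gBr, gl2Br, hS0, h0, h1]

lemma gBr_mem_mSub_of_mem (h : k + 4 = n) {x y : Gg n} (hx : x ∈ mSub n k)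
    (hy : y ∈ mSub n k) : gBr n x y ∈ mSub n k := by
  obtain ⟨h0, h1, h2, -⟩ := hx
  obtain ⟨k0, k1, k2, -⟩ := hy
  refine mem_mSub h ?_ ?_ ?_ <;> simp [gBr, gl2Br, h0, h1, k0, k1]

end Grading

section Form

variable {n k : ℕ}

/-- The weight of `ε_{i+1}` in the inner product on `g` for which the transpose of `gl₂` acts by
adjoints. -/
def epsWeight (n i : ℕ) : ℝ := ∏ j ∈ Finset.range i, ((j : ℝ) + 1) * (2*(n:ℝ) - 7 - (j:ℝ))

lemma epsWeight_succ (n i : ℕ) :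
    epsWeight n (i + 1) = epsWeight n i * (((i : ℝ) + 1) * (2*(n:ℝ) - 7 - (i:ℝ))) :=
  Finset.prod_range_succ _ _

lemma epsWeight_pos {i : ℕ} (hi : i < 2*n-6) : 0 < epsWeight n i := by
  refine Finset.prod_pos fun j hj => ?_
  have hj := Finset.mem_range.1 hj
  have h1 : j + 7 < 2*n := by omega
  have h2 : (j : ℝ) + 7 < 2 * (n : ℝ) := by exact_mod_cast h1
  exact mul_pos (by positivity) (by linarith)

/-- An inner product on `g` for which the transpose of `gl₂` acts by adjoints. -/
def innerG (n : ℕ) : Gg n →ₗ[ℝ] Gg n →ₗ[ℝ] ℝ :=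
  LinearMap.mk₂ ℝ (fun x y => x.1 0 * y.1 0 + 2 * x.1 1 * y.1 1 + x.1 2 * y.1 2 + x.1 3 * y.1 3 +
      ∑ i : Fin (2*n-6), epsWeight n i * x.2.1 i * y.2.1 i + x.2.2 * y.2.2)
    (fun x y z => by simp [mul_add, add_mul, Finset.sum_add_distrib]; ring)
    (fun c x y => by
      simp only [Prod.smul_fst, Prod.smul_snd, Pi.smul_apply, smul_eq_mul, mul_add,
        Finset.mul_sum]
      congr 1
      · congr 1
        · ring
        · exact Finset.sum_congr rfl fun i _ => by ring
      · ring)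
    (fun x y z => by simp [mul_add, Finset.sum_add_distrib]; ring)
    (fun c x y => by
      simp only [Prod.smul_fst, Prod.smul_snd, Pi.smul_apply, smul_eq_mul, mul_add,
        Finset.mul_sum]
      congr 1
      · congr 1
        · ring
        · exact Finset.sum_congr rfl fun i _ => by ring
      · ring)

lemma innerG_apply (x y : Gg n) : innerG n x y =
    x.1 0 * y.1 0 + 2 * x.1 1 * y.1 1 + x.1 2 * y.1 2 + x.1 3 * y.1 3 +
      ∑ i : Fin (2*n-6), epsWeight n i * x.2.1 i * y.2.1 i + x.2.2 * y.2.2 := rfl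

lemma innerG_comm (x y : Gg n) : innerG n x y = innerG n y x := by
  simp only [innerG_apply]
  rw [Finset.sum_congr rfl fun (i : Fin (2*n-6)) _ => mul_right_comm (epsWeight n i) (x.2.1 i) (y.2.1 i)]
  ring

lemma innerG_self_nonneg (x : Gg n) : 0 ≤ innerG n x x := by
  have h : 0 ≤ ∑ i : Fin (2*n-6), epsWeight n i * x.2.1 i * x.2.1 i :=
    Finset.sum_nonneg fun i _ => by
      rw [mul_assoc]; exact mul_nonneg (epsWeight_pos i.isLt).le (mul_self_nonneg _)
  rw [innerG_apply]
  nlinarith [mul_self_nonneg (x.1 0), mul_self_nonneg (x.1 1), mul_self_nonneg (x.1 2),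
    mul_self_nonneg (x.1 3), mul_self_nonneg x.2.2]

lemma innerG_self_eq_zero {x : Gg n} (hx : innerG n x x = 0) : x = 0 := by
  have hnn (i : Fin (2*n-6)) : 0 ≤ epsWeight n i * x.2.1 i * x.2.1 i := by
    rw [mul_assoc]; exact mul_nonneg (epsWeight_pos i.isLt).le (mul_self_nonneg _)
  have h : 0 ≤ ∑ i : Fin (2*n-6), epsWeight n i * x.2.1 i * x.2.1 i :=
    Finset.sum_nonneg fun i _ => hnn i
  rw [innerG_apply] at hx
  have m0 := mul_self_nonneg (x.1 0)
  have m1 := mul_self_nonneg (x.1 1)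
  have m2 := mul_self_nonneg (x.1 2)
  have m3 := mul_self_nonneg (x.1 3)
  have m4 := mul_self_nonneg x.2.2
  have hs : ∑ i : Fin (2*n-6), epsWeight n i * x.2.1 i * x.2.1 i = 0 := by nlinarith
  have z0 : x.1 0 = 0 := mul_self_eq_zero.1 (by nlinarith)
  have z1 : x.1 1 = 0 := mul_self_eq_zero.1 (by nlinarith)
  have z2 : x.1 2 = 0 := mul_self_eq_zero.1 (by nlinarith)
  have z3 : x.1 3 = 0 := mul_self_eq_zero.1 (by nlinarith)
  ext i
  · fin_cases i
    exacts [z0, z1, z2, z3]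
  · have := (Finset.sum_eq_zero_iff_of_nonneg fun i _ => hnn i).1 hs i (Finset.mem_univ i)
    rw [mul_assoc] at this
    exact mul_self_eq_zero.1 ((mul_eq_zero.1 this).resolve_left (epsWeight_pos i.isLt).ne')
  · exact mul_self_eq_zero.1 (by nlinarith)

/-- The adjoint of the action of `a ∈ gl₂` on `g`, as an element of `gl₂`. -/
def transposeG (A : Gg n) : Gg n := (![A.1 3, A.1 1, A.1 2, A.1 0], 0)

lemma innerG_gBr (A u v : Gg n) (hA : A.2 = 0) :
    innerG n (gBr n A u) v = innerG n u (gBr n (transposeG A) v) := by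
  have hz (a : G2) : phi n a 0 = 0 := by ext i <;> simp [phi]
  have hz' (a : Hs n) : heisBr n 0 a = 0 := by ext i <;> simp [heisBr]
  have key (x y : Hs n) : ∑ i : Fin (2*n-6), epsWeight n i *
        (if h : 0 < i.val then x.1 ⟨i.val - 1, by have := i.isLt; omega⟩ else 0) * y.1 i =
      ∑ i : Fin (2*n-6), epsWeight n i * x.1 i *
        ((((i.val:ℝ)+1) * (2*(n:ℝ) - 7 - (i.val:ℝ))) *
          (if h : i.val + 1 < 2*n-6 then y.1 ⟨i.val+1, h⟩ else 0)) := by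
    have h := sum_fin_shift (2*n-6) (fun i j => epsWeight n j * x.1 i * y.1 j)
    have h' : ∑ i : Fin (2*n-6), epsWeight n i *
        (if h : 0 < i.val then x.1 ⟨i.val - 1, by have := i.isLt; omega⟩ else 0) * y.1 i =
        ∑ i : Fin (2*n-6), (if h : 0 < i.val then epsWeight n i *
          x.1 ⟨i.val - 1, by have := i.isLt; omega⟩ * y.1 i else 0) :=
      Finset.sum_congr rfl fun i _ => by split_ifs <;> simp
    rw [h', h]
    refine Finset.sum_congr rfl fun i _ => ?_
    split_ifs
    · simp only [epsWeight_succ]; ring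
    · simp
  have k1 := congrArg (fun t => A.1 3 * t) (key u.2 v.2)
  have k2 := congrArg (fun t => A.1 0 * t) (key v.2 u.2)
  simp only [Finset.mul_sum] at k1 k2
  have hsum : ∑ i : Fin (2*n-6), epsWeight n i * (phi n A.1 u.2).1 i * v.2.1 i =
      ∑ i : Fin (2*n-6), epsWeight n i * u.2.1 i * (phi n (transposeG A).1 v.2).1 i := by
    rw [← sub_eq_zero] at k1 k2 ⊢
    rw [← Finset.sum_sub_distrib] at k1 k2 ⊢
    have k3 := congrArg₂ (· - ·) k1 k2
    simp only [sub_zero] at k3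
    rw [← Finset.sum_sub_distrib] at k3
    rw [← k3]
    refine Finset.sum_congr rfl fun i _ => ?_
    simp only [phi, transposeG, Matrix.cons_val]
    ring
  simp only [innerG_apply, gBr, hA, hz, hz', sub_zero, add_zero]
  rw [hsum]
  simp [gl2Br, transposeG, phi, hz']
  ring

end Form

section Cochains

variable {n k : ℕ}

/-- A 1-cochain bundled as a linear map. -/
def IsLin1.toLin {ψ : MT n k → Gg n} (hψ : IsLin1 n k ψ) : MT n k →ₗ[ℝ] Gg n where
  toFun := ψ
  map_add' := hψ.1
  map_smul' := hψ.2

lemma isLin1_coe (f : MT n k →ₗ[ℝ] Gg n) : IsLin1 n k f := ⟨f.map_add, f.map_smul⟩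

/-- A 2-cochain bundled as a bilinear map. -/
def IsAlt2.toLin {ψ : MT n k → MT n k → Gg n} (hψ : IsAlt2 n k ψ) :
    MT n k →ₗ[ℝ] MT n k →ₗ[ℝ] Gg n :=
  LinearMap.mk₂ ℝ ψ (fun x y z => (hψ.1 z).1 x y) (fun c x z => (hψ.1 z).2 c x)
    (fun x y z => (hψ.2.1 x).1 y z) (fun c x z => (hψ.2.1 x).2 c z)

lemma isAlt2_coe (f : MT n k →ₗ[ℝ] MT n k →ₗ[ℝ] Gg n) (hf : ∀ x, f x x = 0) :
    IsAlt2 n k (fun x y => f x y) :=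
  ⟨fun y => ⟨fun x z => by simp, fun c x => by simp⟩, fun x => isLin1_coe (f x), hf⟩

lemma IsAlt2.swap {ψ : MT n k → MT n k → Gg n} (hψ : IsAlt2 n k ψ) (x y : MT n k) :
    ψ x y = -ψ y x := by
  have h : hψ.toLin (x + y) (x + y) = 0 := hψ.2.2 (x + y)
  have hx : hψ.toLin x x = 0 := hψ.2.2 x
  have hy : hψ.toLin y y = 0 := hψ.2.2 y
  simp only [map_add, LinearMap.add_apply, hx, hy, zero_add, add_zero] at h
  exact eq_neg_of_add_eq_zero_right h

/-- The bracket of `gl₂ ⋉ heis` with `A`, followed by the projection to `m`. -/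
def adM (k : ℕ) (A : Gg n) : MT n k →ₗ[ℝ] MT n k :=
  ptoML n k ∘ₗ gBrL n A ∘ₗ (mSub n k).subtype

lemma ptoM_gBr (A : Gg n) (x : MT n k) : ptoM n k (gBr n A x.1) = adM k A x := rfl

lemma mBrM_eq (x y : MT n k) : mBrM n k x y = adM k x.1 y := rfl

lemma isLin1_act1 {φ : MT n k → Gg n} (hφ : IsLin1 n k φ) (A : Gg n) :
    IsLin1 n k (act1 n k A φ) :=
  isLin1_coe (gBrL n A ∘ₗ hφ.toLin - hφ.toLin ∘ₗ adM k A)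

lemma isAlt2_act2 {ψ : MT n k → MT n k → Gg n} (hψ : IsAlt2 n k ψ) (A : Gg n) :
    IsAlt2 n k (act2 n k A ψ) := by
  refine isAlt2_coe (hψ.toLin.compr₂ (gBrL n A) - hψ.toLin ∘ₗ adM k A -
    hψ.toLin.compl₂ (adM k A)) fun x => ?_
  change gBrL n A (ψ x x) - ψ (adM k A x) x - ψ x (adM k A x) = 0
  rw [hψ.2.2 x, hψ.swap x]
  simp

lemma isAlt2_cobound {φ : MT n k → Gg n} (hφ : IsLin1 n k φ) :
    IsAlt2 n k (cobound n k φ) := by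
  have e : cobound n k φ = fun x y =>
      (((gBrL n ∘ₗ (mSub n k).subtype).compl₂ hφ.toLin -
        ((gBrL n ∘ₗ (mSub n k).subtype).compl₂ hφ.toLin).flip +
        (((gBrL n ∘ₗ (mSub n k).subtype).compl₂ (mSub n k).subtype).compr₂
          (hφ.toLin ∘ₗ ptoML n k)) : MT n k →ₗ[ℝ] MT n k →ₗ[ℝ] Gg n) x y) := rfl
  rw [e]
  refine isAlt2_coe _ fun x => ?_
  change gBrL n x.1 (φ x) - gBrL n x.1 (φ x) + hφ.toLin (ptoML n k (gBr n x.1 x.1)) = 0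
  simp [gBr_self]

lemma homog1_act1 (h : k + 4 = n) (hn : 6 ≤ n) {φ : MT n k → Gg n} (hφ : IsLin1 n k φ)
    {w s : ℤ} (hw : Homog1 n k w φ) {A : Gg n} (hA : A ∈ gComp n k s) :
    Homog1 n k (w + s) (act1 n k A φ) := by
  intro p hp x hx
  have hAx := gBr_mem_gComp h hA hx
  refine sub_mem ?_ ?_
  · have := gBr_mem_gComp h hA (hw p hp x hx)
    rwa [show s + (p + w) = p + (w + s) by ring] at this
  · by_cases hs : s + p < 0
    · have := hw _ hs _ (coe_ptoM_mem_gComp h hAx)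
      rwa [show s + p + w = p + (w + s) by ring] at this
    · rw [ptoM_eq_zero h hn (not_lt.1 hs) hAx]
      have : φ 0 = 0 := hφ.toLin.map_zero
      simp [this]

lemma homog2_act2 (h : k + 4 = n) (hn : 6 ≤ n) {ψ : MT n k → MT n k → Gg n}
    (hψ : IsAlt2 n k ψ) {w s : ℤ} (hw : Homog2 n k w ψ) {A : Gg n} (hA : A ∈ gComp n k s) :
    Homog2 n k (w + s) (act2 n k A ψ) := by
  intro p q hp hq x y hx hy
  have hAx := gBr_mem_gComp h hA hx
  have hAy := gBr_mem_gComp h hA hy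
  refine sub_mem (sub_mem ?_ ?_) ?_
  · have := gBr_mem_gComp h hA (hw p q hp hq x y hx hy)
    rwa [show s + (p + q + w) = p + q + (w + s) by ring] at this
  · by_cases hs : s + p < 0
    · have := hw _ _ hs hq _ _ (coe_ptoM_mem_gComp h hAx) hy
      rwa [show s + p + q + w = p + q + (w + s) by ring] at this
    · rw [ptoM_eq_zero h hn (not_lt.1 hs) hAx]
      have : ψ 0 y = 0 := LinearMap.map_zero₂ hψ.toLin y
      simp [this]
  · by_cases hs : s + q < 0
    · have := hw _ _ hp hs _ _ hx (coe_ptoM_mem_gComp h hAy)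
      rwa [show p + (s + q) + w = p + q + (w + s) by ring] at this
    · rw [ptoM_eq_zero h hn (not_lt.1 hs) hAy]
      have : ψ x 0 = 0 := (hψ.toLin x).map_zero
      simp [this]

lemma homog2_cobound (h : k + 4 = n) {φ : MT n k → Gg n} {w : ℤ} (hw : Homog1 n k w φ) :
    Homog2 n k w (cobound n k φ) := by
  intro p q hp hq x y hx hy
  refine add_mem (sub_mem ?_ ?_) ?_
  · have := gBr_mem_gComp h hx (hw q hq y hy)
    rwa [← add_assoc] at this
  · have := gBr_mem_gComp h hy (hw p hp x hx)
    rwa [← add_assoc, add_comm q p] at this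
  · exact hw (p + q) (by omega) _ (coe_ptoM_mem_gComp h (gBr_mem_gComp h hx hy))

lemma act2_cobound (h : k + 4 = n) {φ : MT n k → Gg n} (hφ : IsLin1 n k φ) {S : Gg n}
    (hS : S.2 = 0) (hS0 : S.1 0 = 0) :
    act2 n k S (cobound n k φ) = cobound n k (act1 n k S φ) := by
  have hd (x y : Gg n) : gBrL n S (gBrL n x y) =
      gBrL n (gBrL n S x) y + gBrL n x (gBrL n S y) :=
    gBr_derivation (by omega) S x y hS hS0
  have hS' (x : MT n k) : (adM k S x : Gg n) = gBrL n S x :=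
    coe_ptoM_of_mem h (gBr_mem_mSub h hS0 x.2)
  have hm (x y : MT n k) : (adM k (x : Gg n) y : Gg n) = gBrL n x y :=
    coe_ptoM_of_mem h (gBr_mem_mSub_of_mem h x.2 y.2)
  have hφadd := hφ.1
  funext x y
  simp only [act2, act1, cobound, mBrM_eq, ptoM_gBr]
  have hbr : adM k S (adM k (x : Gg n) y) =
      adM k (adM k S x : Gg n) y + adM k (x : Gg n) (adM k S y) := by
    apply Subtype.ext
    rw [Submodule.coe_add, hS', hm, hm, hm, hS', hS', hd]
  rw [hbr, hφadd]
  simp only [gBr_eq, map_add, map_sub, hd, hS']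
  abel

end Cochains

section Pairing

variable {n k : ℕ}

/-- Indices for the basis `X, η, ε_1, …, ε_{2n-6}` of `m`. -/
abbrev MIndex (n : ℕ) : Type := Option (Option (Fin (2*n-6)))

/-- The basis `X, η, ε_1, …, ε_{2n-6}` of `m`. -/
def mBasis (n k : ℕ) : MIndex n → MT n k
  | none => ptoM n k (bX n)
  | some none => ptoM n k (bEta n)
  | some (some i) => ptoM n k (bEps n (i.val + 1))

/-- The inverse squared norms of the basis vectors of `m`. -/
def mCoef (n : ℕ) : MIndex n → ℝ
  | none => 1
  | some none => 1
  | some (some i) => (epsWeight n i)⁻¹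

/-- The weights of the basis vectors of `m`. -/
def mWeight (n : ℕ) : MIndex n → ℤ
  | none => -1
  | some none => 5 - 2 * (n : ℤ)
  | some (some i) => -((i.val : ℤ) + 1)

lemma mCoef_pos (a : MIndex n) : 0 < mCoef n a := by
  rcases a with - | - | i
  · exact one_pos
  · exact one_pos
  · exact inv_pos.2 (epsWeight_pos i.isLt)

lemma mWeight_neg (hn : 6 ≤ n) (a : MIndex n) : mWeight n a < 0 := by
  rcases a with - | - | i <;> simp only [mWeight] <;> omega

lemma mBasis_mem_gComp (h : k + 4 = n) (a : MIndex n) :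
    (mBasis n k a : Gg n) ∈ gComp n k (mWeight n a) := by
  rcases a with - | - | i
  · refine coe_ptoM_mem_gComp h ((mem_gComp_iff h _ _).2 ?_)
    simp [bX, mWeight]
  · refine coe_ptoM_mem_gComp h ((mem_gComp_iff h _ _).2 ?_)
    simp [bEta, etaV, mWeight]
  · refine coe_ptoM_mem_gComp h ((mem_gComp_iff h _ _).2 ?_)
    refine ⟨by simp [bEps], by simp [bEps], by simp [bEps], by simp [bEps], fun j => ?_,
      by simp [bEps, epsV]⟩
    by_cases hj : j = i
    · right; simp [hj, mWeight]
    · left; simp [bEps, epsV, Fin.val_inj, hj]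

lemma innerG_ptoM_right (h : k + 4 = n) (x : MT n k) (u : Gg n) :
    innerG n x (ptoM n k u) = innerG n x u := by
  obtain ⟨h0, h1, h2, -⟩ := x.2
  change innerG n x (Pm n k u) = _
  rw [Pm_eq h, innerG_apply, innerG_apply, h0, h1, h2]
  simp

lemma innerG_ptoM_left (h : k + 4 = n) (x : MT n k) (u : Gg n) :
    innerG n (ptoM n k u) x = innerG n u x := by
  rw [innerG_comm, innerG_ptoM_right h, innerG_comm]

lemma mBasis_expansion (h : k + 4 = n) (x : MT n k) :
    x = ∑ a, (mCoef n a * innerG n x (mBasis n k a)) • mBasis n k a := by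
  have hX : innerG n x (bX n) = (x : Gg n).1 3 := by simp [innerG_apply, bX]
  have hEta : innerG n x (bEta n) = (x : Gg n).2.2 := by simp [innerG_apply, bEta, etaV]
  have hEps (i : Fin (2*n-6)) :
      (epsWeight n i)⁻¹ * innerG n x (bEps n (i.val + 1)) = (x : Gg n).2.1 i := by
    have := (epsWeight_pos i.isLt).ne'
    simp [innerG_apply, bEps, epsV, Fin.val_inj]
    field_simp
  rw [Fintype.sum_option, Fintype.sum_option]
  simp only [mBasis, mCoef, innerG_ptoM_right h, hX, hEta, hEps, one_mul]
  simp only [ptoM_eq, ← map_smul, ← map_sum, ← map_add]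
  rw [← ptoM_eq]
  apply Subtype.ext
  change (x : Gg n) = Pm n k _
  rw [Pm_eq h]
  obtain ⟨h0, h1, h2, -⟩ := x.2
  ext i
  · fin_cases i <;> simp [h0, h1, h2, bX, bEta, bEps, Prod.fst_sum]
  · simp [bX, bEta, etaV, bEps, epsV, Prod.fst_sum, Prod.snd_sum, Finset.sum_apply, Fin.val_inj]
  · simp [bX, bEta, etaV, bEps, epsV, Prod.snd_sum]

lemma sum_innerG_adjoint (h : k + 4 = n) (f g : MT n k →ₗ[ℝ] Gg n) {T S : MT n k → MT n k}
    (hTS : ∀ x y : MT n k, innerG n (T x) y = innerG n x (S y)) :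
    ∑ a, mCoef n a * innerG n (f (T (mBasis n k a))) (g (mBasis n k a)) =
      ∑ a, mCoef n a * innerG n (f (mBasis n k a)) (g (S (mBasis n k a))) := by
  have h1 (a : MIndex n) : f (T (mBasis n k a)) =
      ∑ b, (mCoef n b * innerG n (mBasis n k a) (S (mBasis n k b))) • f (mBasis n k b) := by
    conv_lhs => rw [mBasis_expansion h (T (mBasis n k a))]
    simp only [map_sum, map_smul, hTS]
  have h2 (b : MIndex n) : g (S (mBasis n k b)) =
      ∑ a, (mCoef n a * innerG n (mBasis n k a) (S (mBasis n k b))) • g (mBasis n k a) := by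
    conv_lhs => rw [mBasis_expansion h (S (mBasis n k b))]
    simp only [map_sum, map_smul]
    exact Finset.sum_congr rfl fun a _ => by rw [innerG_comm]
  simp only [h1, h2, map_sum, map_smul, LinearMap.sum_apply, LinearMap.smul_apply, smul_eq_mul,
    Finset.mul_sum]
  rw [Finset.sum_comm]
  exact Finset.sum_congr rfl fun b _ => Finset.sum_congr rfl fun a _ => by ring

/-- The inner product on arrays of values of 2-cochains on the basis of `m`. -/
def arrayForm (n : ℕ) : LinearMap.BilinForm ℝ (MIndex n → MIndex n → Gg n) :=
  LinearMap.mk₂ ℝ (fun u v => ∑ a, ∑ b, mCoef n a * (mCoef n b * innerG n (u a b) (v a b)))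
    (fun x y z => by simp [mul_add, Finset.sum_add_distrib])
    (fun c x y => by
      simp only [Pi.smul_apply, map_smul, LinearMap.smul_apply, smul_eq_mul, Finset.mul_sum]
      exact Finset.sum_congr rfl fun a _ => Finset.sum_congr rfl fun b _ => by ring)
    (fun x y z => by simp [mul_add, Finset.sum_add_distrib])
    (fun c x y => by
      simp only [Pi.smul_apply, map_smul, smul_eq_mul, Finset.mul_sum]
      exact Finset.sum_congr rfl fun a _ => Finset.sum_congr rfl fun b _ => by ring)

lemma arrayForm_apply (u v : MIndex n → MIndex n → Gg n) : arrayForm n u v =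
    ∑ a, ∑ b, mCoef n a * (mCoef n b * innerG n (u a b) (v a b)) := rfl

lemma arrayForm_comm (u v : MIndex n → MIndex n → Gg n) :
    arrayForm n u v = arrayForm n v u := by
  simp only [arrayForm_apply, innerG_comm]

lemma arrayForm_self_eq_zero {u : MIndex n → MIndex n → Gg n} (hu : arrayForm n u u = 0) :
    u = 0 := by
  have hnn (a b : MIndex n) : 0 ≤ mCoef n a * (mCoef n b * innerG n (u a b) (u a b)) :=
    mul_nonneg (mCoef_pos a).le (mul_nonneg (mCoef_pos b).le (innerG_self_nonneg _))
  rw [arrayForm_apply] at hu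
  funext a b
  have h1 := (Finset.sum_eq_zero_iff_of_nonneg
    fun a _ => Finset.sum_nonneg fun b _ => hnn a b).1 hu a (Finset.mem_univ a)
  have h2 := (Finset.sum_eq_zero_iff_of_nonneg fun b _ => hnn a b).1 h1 b (Finset.mem_univ b)
  exact innerG_self_eq_zero ((mul_eq_zero.1 ((mul_eq_zero.1 h2).resolve_left
    (mCoef_pos a).ne')).resolve_left (mCoef_pos b).ne')

/-- Evaluation of 2-cochains on the basis of `m`. -/
def evalBasis (n k : ℕ) :
    (MT n k → MT n k → Gg n) →ₗ[ℝ] (MIndex n → MIndex n → Gg n) where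
  toFun ψ a b := ψ (mBasis n k a) (mBasis n k b)
  map_add' _ _ := rfl
  map_smul' _ _ := rfl

/-- The inner product of 2-cochains. -/
def pairing (n k : ℕ) : LinearMap.BilinForm ℝ (MT n k → MT n k → Gg n) :=
  (arrayForm n).comp (evalBasis n k) (evalBasis n k)

lemma pairing_apply (ψ χ : MT n k → MT n k → Gg n) : pairing n k ψ χ =
    ∑ a, ∑ b, mCoef n a * (mCoef n b * innerG n (ψ (mBasis n k a) (mBasis n k b))
      (χ (mBasis n k a) (mBasis n k b))) := rfl

lemma eq_zero_of_evalBasis (h : k + 4 = n) {ψ : MT n k → MT n k → Gg n} (hψ : IsAlt2 n k ψ)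
    (h0 : evalBasis n k ψ = 0) : ψ = 0 := by
  funext x y
  change hψ.toLin x y = 0
  rw [mBasis_expansion h x, mBasis_expansion h y]
  simp only [map_sum, map_smul, LinearMap.sum_apply, LinearMap.smul_apply]
  refine Finset.sum_eq_zero fun a _ => ?_
  refine smul_eq_zero_of_right _ (Finset.sum_eq_zero fun b _ => smul_eq_zero_of_right _ ?_)
  exact congrFun (congrFun h0 b) a

lemma eq_zero_of_pairing_self (h : k + 4 = n) {ψ : MT n k → MT n k → Gg n}
    (hψ : IsAlt2 n k ψ) (h0 : pairing n k ψ ψ = 0) : ψ = 0 :=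
  eq_zero_of_evalBasis h hψ (arrayForm_self_eq_zero h0)

lemma innerG_eq_zero_of_ne (h : k + 4 = n) {p q : ℤ} (hpq : p ≠ q) {x y : Gg n}
    (hx : x ∈ gComp n k p) (hy : y ∈ gComp n k q) : innerG n x y = 0 := by
  rw [mem_gComp_iff h] at hx hy
  obtain ⟨a0, a1, a2, a3, a4, a5⟩ := hx
  obtain ⟨b0, b1, b2, b3, b4, b5⟩ := hy
  have aux {s t : ℝ} {e : ℤ} (h1 : s = 0 ∨ p = e) (h2 : t = 0 ∨ q = e) : s * t = 0 := by
    rcases h1 with h1 | h1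
    · simp [h1]
    · rcases h2 with h2 | h2
      · simp [h2]
      · exact absurd (h1.trans h2.symm) hpq
  rw [innerG_apply, Finset.sum_eq_zero fun i _ => by rw [mul_assoc, aux (a4 i) (b4 i), mul_zero],
    mul_assoc 2, aux a0 b0, aux a1 b1, aux a2 b2, aux a3 b3, aux a5 b5]
  simp

lemma pairing_eq_zero_of_ne (h : k + 4 = n) (hn : 6 ≤ n) {w w' : ℤ} (hw : w ≠ w')
    {ψ χ : MT n k → MT n k → Gg n} (hψ : Homog2 n k w ψ) (hχ : Homog2 n k w' χ) :
    pairing n k ψ χ = 0 := by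
  rw [pairing_apply]
  refine Finset.sum_eq_zero fun a _ => Finset.sum_eq_zero fun b _ => ?_
  have ha := mBasis_mem_gComp h a
  have hb := mBasis_mem_gComp h b
  rw [innerG_eq_zero_of_ne h _
    (hψ _ _ (mWeight_neg hn a) (mWeight_neg hn b) _ _ ha hb)
    (hχ _ _ (mWeight_neg hn a) (mWeight_neg hn b) _ _ ha hb), mul_zero, mul_zero]
  omega

lemma pairing_act2 (h : k + 4 = n) {ψ χ : MT n k → MT n k → Gg n} (hψ : IsAlt2 n k ψ)
    (hχ : IsAlt2 n k χ) {A : Gg n} (hA : A.2 = 0) :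
    pairing n k (act2 n k A ψ) χ = pairing n k ψ (act2 n k (transposeG A) χ) := by
  have hTS (x y : MT n k) :
      innerG n (adM k A x) y = innerG n x (adM k (transposeG A) y) := by
    rw [← ptoM_gBr, ← ptoM_gBr, innerG_ptoM_left h, innerG_ptoM_right h, innerG_gBr A _ _ hA]
  have e1 (b : MIndex n) := sum_innerG_adjoint h (hψ.toLin.flip (mBasis n k b))
    (hχ.toLin.flip (mBasis n k b)) hTS
  have e2 (a : MIndex n) := sum_innerG_adjoint h (hψ.toLin (mBasis n k a))
    (hχ.toLin (mBasis n k a)) hTS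
  have f1 : ∑ a, ∑ b, mCoef n a * (mCoef n b *
        innerG n (ψ (adM k A (mBasis n k a)) (mBasis n k b))
          (χ (mBasis n k a) (mBasis n k b))) =
      ∑ a, ∑ b, mCoef n a * (mCoef n b * innerG n (ψ (mBasis n k a) (mBasis n k b))
          (χ (adM k (transposeG A) (mBasis n k a)) (mBasis n k b))) := by
    refine Finset.sum_comm.trans (Eq.trans (Finset.sum_congr rfl fun b _ => ?_) Finset.sum_comm)
    have e := congrArg (fun t => mCoef n b * t) (e1 b)
    simp only [Finset.mul_sum] at e
    exact (Finset.sum_congr rfl fun a _ => mul_left_comm _ _ _).trans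
      (e.trans (Finset.sum_congr rfl fun a _ => mul_left_comm _ _ _))
  have f2 : ∑ a, ∑ b, mCoef n a * (mCoef n b *
        innerG n (ψ (mBasis n k a) (adM k A (mBasis n k b)))
          (χ (mBasis n k a) (mBasis n k b))) =
      ∑ a, ∑ b, mCoef n a * (mCoef n b * innerG n (ψ (mBasis n k a) (mBasis n k b))
          (χ (mBasis n k a) (adM k (transposeG A) (mBasis n k b)))) := by
    refine Finset.sum_congr rfl fun a _ => ?_
    simp only [← Finset.mul_sum]
    exact congrArg (fun t => mCoef n a * t) (e2 a)
  simp only [pairing_apply, act2, ptoM_gBr, map_sub, LinearMap.sub_apply, mul_sub,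
    Finset.sum_sub_distrib, innerG_gBr A _ _ hA, f1, f2]

end Pairing

section Normalization

variable {n k : ℕ}

/-- The homogeneous alternating 2-cochains of weight `w` orthogonal to the coboundaries of the
homogeneous 1-cochains of weight `w`. -/
def IsNormalized (n k : ℕ) (w : ℤ) (ψ : MT n k → MT n k → Gg n) : Prop :=
  IsAlt2 n k ψ ∧ Homog2 n k w ψ ∧
    ∀ φ, IsLin1 n k φ → Homog1 n k w φ → pairing n k ψ (cobound n k φ) = 0

/-- The span of the normalized 2-cochains of positive weight. -/
def normalSub (n k : ℕ) : Submodule ℝ (MT n k → MT n k → Gg n) :=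
  Submodule.span ℝ {ψ | ∃ w : ℤ, 0 < w ∧ IsNormalized n k w ψ}

/-- The coboundary as a linear map on all functions `m → g`. -/
def coboundL (n k : ℕ) : (MT n k → Gg n) →ₗ[ℝ] (MT n k → MT n k → Gg n) where
  toFun := cobound n k
  map_add' φ χ := by
    funext x y
    simp only [cobound, Pi.add_apply, gBr_eq, map_add]
    abel
  map_smul' c φ := by
    funext x y
    simp only [cobound, Pi.smul_apply, gBr_eq, map_smul, RingHom.id_apply, smul_add, smul_sub]

lemma imDel_eq (n k : ℕ) : imDel n k = Submodule.span ℝ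
    (cobound n k '' {φ | IsLin1 n k φ ∧ ∃ w : ℤ, 0 < w ∧ Homog1 n k w φ}) := by
  have h1 : (cobound n k '' {φ | φ ∈ C1plus n k}) =
      ((C1plus n k).map (coboundL n k) : Submodule ℝ (MT n k → MT n k → Gg n)) := rfl
  rw [imDel, h1, Submodule.span_eq, C1plus, Submodule.map_span]
  rfl

lemma imDel_le (h : k + 4 = n) : imDel n k ≤ C2plus n k := by
  rw [imDel_eq, Submodule.span_le]
  rintro _ ⟨φ, ⟨hφ, w, hw, hh⟩, rfl⟩
  exact Submodule.subset_span ⟨isAlt2_cobound hφ, w, hw, homog2_cobound h hh⟩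

lemma normalSub_le (n k : ℕ) : normalSub n k ≤ C2plus n k := by
  rw [normalSub, Submodule.span_le]
  rintro ψ ⟨w, hw, h1, h2, -⟩
  exact Submodule.subset_span ⟨h1, w, hw, h2⟩

lemma isAlt2_of_mem_C2plus {ψ : MT n k → MT n k → Gg n} (hψ : ψ ∈ C2plus n k) :
    IsAlt2 n k ψ := by
  induction hψ using Submodule.span_induction with
  | mem ψ hψ => exact hψ.1
  | zero => exact isAlt2_coe 0 fun x => rfl
  | add ψ χ _ _ h1 h2 =>
    refine isAlt2_coe (h1.toLin + h2.toLin) fun x => ?_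
    change ψ x x + χ x x = 0
    rw [h1.2.2, h2.2.2, add_zero]
  | smul c ψ _ h1 =>
    refine isAlt2_coe (c • h1.toLin) fun x => ?_
    change c • ψ x x = 0
    rw [h1.2.2, smul_zero]

lemma disjoint_normalSub_imDel (h : k + 4 = n) (hn : 6 ≤ n) :
    Disjoint (normalSub n k) (imDel n k) := by
  rw [Submodule.disjoint_def]
  intro ψ h1 h2
  refine eq_zero_of_pairing_self h (isAlt2_of_mem_C2plus (normalSub_le n k h1)) ?_
  have hle : normalSub n k ≤ LinearMap.ker ((pairing n k).flip ψ) := by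
    rw [normalSub, Submodule.span_le]
    rintro χ ⟨w, hw, hχ1, hχ2, hχ3⟩
    have hle' : imDel n k ≤ LinearMap.ker (pairing n k χ) := by
      rw [imDel_eq, Submodule.span_le]
      rintro _ ⟨φ, ⟨hφ, w', hw', hh⟩, rfl⟩
      by_cases hww : w = w'
      · subst hww
        exact hχ3 φ hφ hh
      · exact pairing_eq_zero_of_ne h hn hww hχ2 (homog2_cobound h hh)
    exact hle' h2
  exact hle h1

/-- The linear homogeneous 1-cochains of weight `w`. -/
def homogSub (n k : ℕ) (w : ℤ) : Submodule ℝ (MT n k → Gg n) where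
  carrier := {φ | IsLin1 n k φ ∧ Homog1 n k w φ}
  add_mem' h1 h2 := ⟨isLin1_coe (h1.1.toLin + h2.1.toLin),
    fun p hp x hx => add_mem (h1.2 p hp x hx) (h2.2 p hp x hx)⟩
  zero_mem' := ⟨isLin1_coe 0, fun _ _ _ _ => zero_mem _⟩
  smul_mem' c _ h1 := ⟨isLin1_coe (c • h1.1.toLin),
    fun p hp x hx => Submodule.smul_mem _ c (h1.2 p hp x hx)⟩

lemma exists_isNormalized_sub (h : k + 4 = n) {w : ℤ} {ψ : MT n k → MT n k → Gg n}
    (hψ : IsAlt2 n k ψ) (hw : Homog2 n k w ψ) :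
    ∃ φ ∈ homogSub n k w, IsNormalized n k w (ψ - cobound n k φ) := by
  set W := (homogSub n k w).map (evalBasis n k ∘ₗ coboundL n k)
  have hrefl : (arrayForm n).IsRefl := fun u v huv => by rw [arrayForm_comm, huv]
  have hdisj : Disjoint W ((arrayForm n).orthogonal W) := by
    rw [Submodule.disjoint_def]
    intro u hu hu'
    exact arrayForm_self_eq_zero (hu' u hu)
  have hc := ((arrayForm n).isCompl_orthogonal_iff_disjoint hrefl).2 hdisj
  obtain ⟨u, hu, v, hv, huv⟩ := Submodule.mem_sup.1
    (hc.sup_eq_top ▸ Submodule.mem_top : evalBasis n k ψ ∈ W ⊔ (arrayForm n).orthogonal W)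
  obtain ⟨φ, hφ, rfl⟩ := hu
  refine ⟨φ, hφ, ?_, ?_, ?_⟩
  · have h2 := isAlt2_cobound hφ.1
    refine isAlt2_coe (hψ.toLin - h2.toLin) fun x => ?_
    change ψ x x - cobound n k φ x x = 0
    rw [hψ.2.2, h2.2.2, sub_zero]
  · intro p q hp hq x y hx hy
    exact sub_mem (hw p q hp hq x y hx hy) (homog2_cobound h hφ.2 p q hp hq x y hx hy)
  · intro χ hχ1 hχ2
    have hv' : evalBasis n k (ψ - cobound n k φ) = v := by
      rw [map_sub, ← huv]
      exact add_sub_cancel_left _ _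
    change arrayForm n (evalBasis n k (ψ - cobound n k φ)) (evalBasis n k (cobound n k χ)) = 0
    rw [hv', arrayForm_comm]
    exact hv _ ⟨χ, ⟨hχ1, hχ2⟩, rfl⟩

lemma normalSub_sup_imDel (h : k + 4 = n) : normalSub n k ⊔ imDel n k = C2plus n k := by
  refine le_antisymm (sup_le (normalSub_le n k) (imDel_le h)) ?_
  rw [C2plus, Submodule.span_le]
  rintro ψ ⟨hψ, w, hw, hh⟩
  obtain ⟨φ, hφ, hN⟩ := exists_isNormalized_sub h hψ hh
  rw [← sub_add_cancel ψ (cobound n k φ)]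
  refine Submodule.add_mem_sup (Submodule.subset_span ⟨w, hw, hN⟩) ?_
  rw [imDel_eq]
  exact Submodule.subset_span ⟨φ, ⟨hφ.1, w, hw, hφ.2⟩, rfl⟩

lemma transposeG_mem_gComp (h : k + 4 = n) {s : ℤ} {A : Gg n} (hA : A ∈ gComp n k s) :
    transposeG A ∈ gComp n k (-s) := by
  rw [mem_gComp_iff h] at hA ⊢
  obtain ⟨a0, a1, a2, a3, -⟩ := hA
  refine ⟨a3.imp_right ?_, a1.imp_right ?_, a2.imp_right ?_, a0.imp_right ?_,
    fun i => Or.inl rfl, Or.inl rfl⟩ <;> omega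

lemma isNormalized_act2 (h : k + 4 = n) (hn : 6 ≤ n) {w s : ℤ} {A : Gg n} (hA : A.2 = 0)
    (hA3 : A.1 3 = 0) (hs : A ∈ gComp n k s) {ψ : MT n k → MT n k → Gg n}
    (hψ : IsNormalized n k w ψ) : IsNormalized n k (w + s) (act2 n k A ψ) := by
  refine ⟨isAlt2_act2 hψ.1 A, homog2_act2 h hn hψ.1 hψ.2.1 hs, fun φ h1 h2 => ?_⟩
  rw [pairing_act2 h hψ.1 (isAlt2_cobound h1) hA, act2_cobound h h1 rfl hA3]
  refine hψ.2.2 _ (isLin1_act1 h1 _) ?_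
  have := homog1_act1 h hn h1 h2 (transposeG_mem_gComp h hs)
  rwa [add_neg_cancel_right] at this

/-- The action of `A` on all functions `m → m → g`, as a linear map. -/
def act2L (n k : ℕ) (A : Gg n) :
    (MT n k → MT n k → Gg n) →ₗ[ℝ] (MT n k → MT n k → Gg n) where
  toFun := act2 n k A
  map_add' ψ χ := by
    funext x y
    simp only [act2, Pi.add_apply, gBr_eq, map_add]
    abel
  map_smul' c ψ := by
    funext x y
    simp only [act2, Pi.smul_apply, gBr_eq, map_smul, RingHom.id_apply, smul_sub]

lemma act2_add_left {ψ : MT n k → MT n k → Gg n} (hψ : IsAlt2 n k ψ) (A B : Gg n) :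
    act2 n k (A + B) ψ = act2 n k A ψ + act2 n k B ψ := by
  funext x y
  have hadd (u v : MT n k) (z : MT n k) : ψ (u + v) z = ψ u z + ψ v z := (hψ.1 z).1 u v
  have hadd' (u v : MT n k) (z : MT n k) : ψ z (u + v) = ψ z u + ψ z v := (hψ.2.1 z).1 u v
  simp only [act2, Pi.add_apply, gBr_eq, ptoM_eq, map_add, LinearMap.add_apply, hadd, hadd']
  abel

lemma act2_mem_normalSub (h : k + 4 = n) (hn : 6 ≤ n) {A : Gg n} (hA : A ∈ g0Sub n k)
    {ψ : MT n k → MT n k → Gg n} (hψ : ψ ∈ normalSub n k) : act2 n k A ψ ∈ normalSub n k := by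
  suffices hle : normalSub n k ≤ (normalSub n k).comap (act2L n k A) from hle hψ
  conv_lhs => rw [normalSub]
  rw [Submodule.span_le]
  rintro χ ⟨w, hw, hχ⟩
  obtain ⟨h3, hη, hε⟩ := hA
  have hdec : A = (![A.1 0, 0, 0, 0], 0) + (![0, A.1 1, A.1 2, 0], 0) := by
    ext i
    · fin_cases i <;> simp [h3]
    · simpa using hε i (by omega)
    · simpa using hη
  change act2 n k A χ ∈ normalSub n k
  rw [hdec, act2_add_left hχ.1]
  have hY : ((![A.1 0, 0, 0, 0], 0) : Gg n) ∈ gComp n k 1 := by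
    rw [mem_gComp_iff h]; simp
  have hHE : ((![0, A.1 1, A.1 2, 0], 0) : Gg n) ∈ gComp n k 0 := by
    rw [mem_gComp_iff h]; simp
  exact add_mem
    (Submodule.subset_span ⟨w + 1, by omega, isNormalized_act2 h hn rfl rfl hY hχ⟩)
    (Submodule.subset_span ⟨w + 0, by omega, isNormalized_act2 h hn rfl rfl hHE hχ⟩)

end Normalization

/-- with the grading `wght Y = 1`, `wght H = wght E = 0`, `wght X = -1`,
`wght ε_i = -i`, `wght η = 5-2n` (the case `k = n-4`, so `m = span{X, ε_1,…,ε_{2n-6}, η}`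
and `g⁰ = span{Y,H,E}`), there exists a linear invariant normalization condition for
`(m,g)`: a subspace `N ⊆ C²₊(m,g)`, invariant under the `g⁰`-action and spanned by
weight-homogeneous elements, with `C²₊(m,g) = N ⊕ ∂(C¹₊(m,g))`. -/
theorem exists_invariant_normalization_condition (n : ℕ) (hn : 6 ≤ n) :
    ∃ N : Submodule ℝ (MT n (n-4) → MT n (n-4) → Gg n),
      N ≤ C2plus n (n-4) ∧
      (∀ A ∈ g0Sub n (n-4), ∀ ψ ∈ N, act2 n (n-4) A ψ ∈ N) ∧
      N = Submodule.span ℝ {ψ | ψ ∈ N ∧ ∃ w : ℤ, Homog2 n (n-4) w ψ} ∧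
      N ⊔ imDel n (n-4) = C2plus n (n-4) ∧
      Disjoint N (imDel n (n-4)) := by
  have h : n - 4 + 4 = n := by omega
  refine ⟨normalSub n (n-4), normalSub_le _ _, fun A hA ψ hψ => act2_mem_normalSub h hn hA hψ,
    le_antisymm ?_ (Submodule.span_le.2 fun ψ hψ => hψ.1), normalSub_sup_imDel h,
    disjoint_normalSub_imDel h hn⟩
  conv_lhs => rw [normalSub]
  refine Submodule.span_mono ?_
  rintro ψ ⟨w, hw, hψ⟩
  exact ⟨Submodule.subset_span ⟨w, hw, hψ⟩, w, hψ.2.1⟩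
end
end
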